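/- Rigidity of comparable homogeneous global minimizers: assume {U₀ > 0} is connected. If V is a positively 1-homogeneous global minimizer of J (V(t x) = t V(x) for t > 0) with V(x) ≥ U₀(x) for all x, then V = U₀. Likewise, if V is a positively 1-homogeneous global minimizer with 0 ≤ V ≤ U₀ and V not identically zero, then V = U₀. -/

import Mathlib

open MeasureTheory Metric Set Filter ENNReal NNReal

/-- The Alt–Caffarelli energy `J_D(u) = ∫_D (‖∇u‖² + 𝟙_{u>0})`, valued in `[0,∞]`. -/
noncomputable def JE {n : ℕ} (D : Set (EuclideanSpace ℝ (Fin n)))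
    (u : EuclideanSpace ℝ (Fin n) → ℝ) : ℝ≥0∞ :=
  ∫⁻ x in D, ((‖gradient u x‖₊ : ℝ≥0∞) ^ 2 + if 0 < u x then 1 else 0)

/-- `u` is a (nonnegative, locally Lipschitz) minimizer of `J` in the open set `Ω`:
for every nonnegative locally Lipschitz competitor `v` with `{v ≠ u}` a bounded subset
of `Ω`, one has `J_{Ω ∩ B}(u) ≤ J_{Ω ∩ B}(v)` for every open ball `B ⊇ {v ≠ u}`. -/
def IsMinimizer {n : ℕ} (Ω : Set (EuclideanSpace ℝ (Fin n)))
    (u : EuclideanSpace ℝ (Fin n) → ℝ) : Prop :=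
  (∀ x, 0 ≤ u x) ∧ LocallyLipschitz u ∧
  ∀ v : EuclideanSpace ℝ (Fin n) → ℝ, (∀ x, 0 ≤ v x) → LocallyLipschitz v →
    Bornology.IsBounded {x | v x ≠ u x} → {x | v x ≠ u x} ⊆ Ω →
    ∀ (c : EuclideanSpace ℝ (Fin n)) (r : ℝ), {x | v x ≠ u x} ⊆ Metric.ball c r →
      JE (Ω ∩ Metric.ball c r) u ≤ JE (Ω ∩ Metric.ball c r) v

/-!
Let `γ` be the standard Gaussian measure, and let `u ≤ V` be nonzero positively `1`-homogeneous
minimizers. If `0 ≤ w ≤ V`, adding a small multiple (of either sign) of a truncated Gaussian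
times `w` does not enlarge `{V > 0}`, so minimality together with Euler's identity `⟨∇V, x⟩ = V`
gives `∫ ⟨∇V, ∇w⟩ dγ = ∫ V w dγ`. Taking `w = u` and `w = V`, and doing the same for `u`, shows
`∫ ‖∇f‖² dγ = ∫ f² dγ` for `f = u - c V`. When `c` is chosen so that `f` has mean zero, this is
the equality case of the Gaussian Poincaré inequality, and the sharper inequality
`2 ∫ f² dγ ≤ ∫ ‖∇f‖² dγ + ‖∫ ∇f dγ‖²` forces `f = ⟨a, ·⟩`. Now `f` vanishes on `{V = 0}`, which
has positive measure: otherwise nonnegative perturbations cannot enlarge `{V > 0}` up to a null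
set, and adding a small multiple of a truncated Gaussian decreases the energy. Hence `a = 0` and
`u = c V` with `c > 0`.

Under an inner variation the Dirichlet part of the energy of `c V` scales by `c ^ 2` while the
measure of the positivity set is unchanged. If `c ≠ 1`, stationarity of both `V` and `c V` makes
both parts stationary separately; in particular `∫_{V > 0} ∂ₑη = 0` for every test function `η`,
so `{V > 0}` has full measure, a contradiction.
-/

open scoped Topology

section Gradient

variable {E : Type*} [NormedAddCommGroup E] [InnerProductSpace ℝ E] [CompleteSpace E]

lemma norm_gradient (f : E → ℝ) (x : E) : ‖gradient f x‖ = ‖fderiv ℝ f x‖ := by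
  rw [← toDual_gradient, LinearIsometryEquiv.norm_map]

lemma norm_gradient_le_of_lipschitzWith {f : E → ℝ} {K : ℝ≥0} (hf : LipschitzWith K f) (x : E) :
    ‖gradient f x‖ ≤ K :=
  (norm_gradient f x).trans_le (norm_fderiv_le_of_lipschitz ℝ hf)

lemma gradient_eq_of_fderiv_eq {f : E → ℝ} {x a : E} (h : ∀ v, fderiv ℝ f x v = inner ℝ a v) :
    gradient f x = a :=
  ext_inner_right ℝ fun v => inner_gradient_left.trans (h v)

lemma gradient_inner_left (a x : E) : gradient (fun y => inner ℝ a y) x = a :=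
  gradient_eq_of_fderiv_eq fun v => congr($((innerSL ℝ a).fderiv) v)

lemma gradient_fun_add {f g : E → ℝ} {x : E} (hf : DifferentiableAt ℝ f x)
    (hg : DifferentiableAt ℝ g x) :
    gradient (fun y => f y + g y) x = gradient f x + gradient g x :=
  gradient_eq_of_fderiv_eq fun v => by
    simp [fderiv_fun_add hf hg, inner_add_left, inner_gradient_left]

lemma gradient_fun_sub {f g : E → ℝ} {x : E} (hf : DifferentiableAt ℝ f x)
    (hg : DifferentiableAt ℝ g x) :
    gradient (fun y => f y - g y) x = gradient f x - gradient g x :=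
  gradient_eq_of_fderiv_eq fun v => by
    simp [fderiv_fun_sub hf hg, inner_sub_left, inner_gradient_left]

lemma gradient_const_mul (c : ℝ) (f : E → ℝ) (x : E) :
    gradient (fun y => c * f y) x = c • gradient f x :=
  gradient_eq_of_fderiv_eq fun v => by
    change fderiv ℝ (c • f) x v = _
    simp [fderiv_const_smul_field, inner_smul_left, inner_gradient_left]

lemma gradient_fun_mul {f g : E → ℝ} {x : E} (hf : DifferentiableAt ℝ f x)
    (hg : DifferentiableAt ℝ g x) :
    gradient (fun y => f y * g y) x = f x • gradient g x + g x • gradient f x :=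
  gradient_eq_of_fderiv_eq fun v => by
    simp [fderiv_fun_mul hf hg, inner_add_left, inner_smul_left, inner_gradient_left]

end Gradient

section WeakGradient

open scoped Convolution

variable {E : Type*} [NormedAddCommGroup E] [InnerProductSpace ℝ E] [FiniteDimensional ℝ E]
  [MeasurableSpace E] [BorelSpace E]

/-- The locally integrable function `g` has vanishing gradient in the sense of distributions,
tested against compactly supported `C¹` functions. -/
def HasZeroWeakGradient (g : E → ℝ) : Prop :=
  ∀ η : E → ℝ, ContDiff ℝ 1 η → HasCompactSupport η → ∀ e : E, ∫ x, g x * fderiv ℝ η x e = 0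

namespace HasZeroWeakGradient

variable {g : E → ℝ}

lemma convolution_eq (h : HasZeroWeakGradient g) (hg : LocallyIntegrable g) {φ : E → ℝ}
    (hφ : ContDiff ℝ 1 φ) (hφc : HasCompactSupport φ) (x y : E) :
    (φ ⋆[ContinuousLinearMap.lsmul ℝ ℝ, volume] g) x =
      (φ ⋆[ContinuousLinearMap.lsmul ℝ ℝ, volume] g) y := by
  rw [← convolution_flip]
  have hd := hφc.hasFDerivAt_convolution_right (ContinuousLinearMap.lsmul ℝ ℝ).flip hg hφ
  refine is_const_of_fderiv_eq_zero (𝕜 := ℝ) (fun z => (hd z).differentiableAt) (fun z => ?_) x y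
  ext e
  rw [(hd z).fderiv, convolution_precompR_apply _ hg (hφc.fderiv (𝕜 := ℝ))
    (hφ.continuous_fderiv one_ne_zero), convolution_def]
  have hreflect := h (fun t => φ (z - t)) (hφ.comp (contDiff_const.sub contDiff_id))
    (hφc.comp_homeomorph (Homeomorph.subLeft z)) e
  have hfderiv (t : E) : fderiv ℝ (fun t => φ (z - t)) t e = -fderiv ℝ φ (z - t) e := by
    have hd : HasFDerivAt (fun t => φ (z - t)) _ t :=
      (hφ.differentiable one_ne_zero (z - t)).hasFDerivAt.comp t ((hasFDerivAt_id t).const_sub z)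
    simp [hd.fderiv]
  simpa [hfderiv, integral_neg, mul_comm] using hreflect

lemma exists_ae_eq_const (h : HasZeroWeakGradient g) (hg : LocallyIntegrable g) :
    ∃ c : ℝ, ∀ᵐ x, g x = c := by
  let φ (k : ℕ) : ContDiffBump (0 : E) :=
    ⟨1 / ((k : ℝ) + 1), 2 * (1 / ((k : ℝ) + 1)), by positivity,
      lt_two_mul_self (by positivity)⟩
  have hrOut : Tendsto (fun k => (φ k).rOut) atTop (𝓝 0) := by
    simpa only [mul_zero] using (tendsto_one_div_add_atTop_nhds_zero_nat (𝕜 := ℝ)).const_mul 2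
  have hlim := ContDiffBump.ae_convolution_tendsto_right_of_locallyIntegrable (μ := volume)
    hrOut (Eventually.of_forall fun k => le_refl (2 * (φ k).rIn)) hg
  have hconst (k : ℕ) (x y : E) := h.convolution_eq hg (φ := (φ k).normed volume)
    (φ k).contDiff_normed (φ k).hasCompactSupport_normed x y
  obtain ⟨x₀, hx₀⟩ := hlim.exists
  refine ⟨g x₀, hlim.mono fun x hx => tendsto_nhds_unique hx ?_⟩
  simpa only [hconst _ x x₀] using hx₀

end HasZeroWeakGradient

lemma volume_compl_eq_zero_of_setIntegral_fderiv_eq_zero {U : Set E} (hU : IsOpen U)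
    (hne : U.Nonempty) (h : ∀ η : E → ℝ, ContDiff ℝ 1 η → HasCompactSupport η →
      ∀ e : E, ∫ x in U, fderiv ℝ η x e = 0) : volume Uᶜ = 0 := by
  have hweak : HasZeroWeakGradient (U.indicator fun _ => (1 : ℝ)) := fun η hη hηc e => by
    classical
    rw [← h η hη hηc e, ← integral_indicator hU.measurableSet]
    simp only [indicator_apply, ite_mul, one_mul, zero_mul]
  obtain ⟨c, hc⟩ := hweak.exists_ae_eq_const
    ((locallyIntegrable_const 1).indicator hU.measurableSet)
  obtain ⟨x, hxU, hx⟩ : ∃ x ∈ U, U.indicator (fun _ => (1 : ℝ)) x = c :=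
    ((frequently_ae_mem_iff.2 (hU.measure_pos volume hne).ne').and_eventually hc).exists
  filter_upwards [hc] with y hy
  by_contra hyU
  rw [indicator_of_mem hxU] at hx
  rw [indicator_of_notMem hyU, ← hx] at hy
  exact zero_ne_one hy

lemma eq_add_inner_of_ae_gradient_eq {f : E → ℝ} {K : ℝ≥0} (hf : LipschitzWith K f) {a : E}
    (h : ∀ᵐ x, gradient f x = a) (x : E) : f x = f 0 + inner ℝ a x := by
  have hLip : LipschitzWith (K + ‖innerSL ℝ a‖₊) fun y => f y - inner ℝ a y :=
    hf.sub (innerSL ℝ a).lipschitz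
  have hderiv : ∀ᵐ y, gradient (fun z => f z - inner ℝ a z) y = 0 := by
    filter_upwards [h, hf.ae_differentiableAt] with y hy hd
    rw [gradient_fun_sub hd (g := fun z => inner ℝ a z) (innerSL ℝ a).differentiableAt, hy,
      gradient_inner_left, sub_self]
  have hweak : HasZeroWeakGradient fun y => f y - inner ℝ a y := fun η hη hηc e => by
    obtain ⟨L, hL⟩ := hη.lipschitzWith_of_hasCompactSupport hηc one_ne_zero
    have hparts := hLip.integral_lineDeriv_mul_eq (μ := volume) hL hηc (-e)
    have hzero : ∫ y, lineDeriv ℝ (fun z => f z - inner ℝ a z) y (-e) * η y = 0 := by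
      refine integral_eq_zero_of_ae ?_
      filter_upwards [hderiv, hLip.ae_differentiableAt] with y hy hd
      rw [hd.lineDeriv_eq_fderiv, ← inner_gradient_left, hy, inner_zero_left, zero_mul,
        Pi.zero_apply]
    rw [hzero, neg_neg] at hparts
    rw [hparts]
    refine integral_congr_ae (Eventually.of_forall fun y => ?_)
    simp only [(hη.differentiable one_ne_zero y).lineDeriv_eq_fderiv, mul_comm]
  obtain ⟨c, hc⟩ := hweak.exists_ae_eq_const hLip.continuous.locallyIntegrable
  have hconst := congr_fun ((Continuous.ae_eq_iff_eq volume hLip.continuous continuous_const).1 hc)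
  linarith [hconst x, hconst 0, inner_zero_right (𝕜 := ℝ) a]

end WeakGradient

section Wirtinger

open scoped Real

lemma hasDerivAt_mul_tan_mul {l s : ℝ} (hs : Real.cos (l * s) ≠ 0) :
    HasDerivAt (fun s => l * Real.tan (l * s)) (l ^ 2 + (l * Real.tan (l * s)) ^ 2) s := by
  convert! ((Real.hasDerivAt_tan hs).comp s ((hasDerivAt_id s).const_mul l)).const_mul l using 1
  rw [Real.tan_eq_sin_div_cos]
  field_simp
  linear_combination l ^ 2 * Real.sin_sq_add_cos_sq (l * s)

variable {h : ℝ → ℝ} {K : ℝ≥0}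

lemma intervalIntegrable_deriv_sq_of_lipschitzWith (hh : LipschitzWith K h) (a b : ℝ) :
    IntervalIntegrable (fun s => deriv h s ^ 2) volume a b := by
  refine (intervalIntegrable_const (c := (K : ℝ) ^ 2)).mono_fun
    ((measurable_deriv h).pow_const 2).aestronglyMeasurable (Eventually.of_forall fun s => ?_)
  simp only [norm_pow, NNReal.norm_eq]
  gcongr
  exact norm_deriv_le_of_lipschitz hh

-- For `q = l tan (l ·)` one has `q' = l² + q²`, so `(h² q)' + h'² = l² h² + (h' + h q)²`;
-- integrating, the boundary terms of `h² q` vanish.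
lemma sq_mul_integral_sq_le_of_dirichlet (hh : LipschitzWith K h) (h₁ : h (-(π / 2)) = 0)
    (h₂ : h (π / 2) = 0) {l : ℝ} (hl : l ∈ Ioo (0 : ℝ) 1) :
    l ^ 2 * ∫ s in (-(π / 2))..(π / 2), h s ^ 2 ≤ ∫ s in (-(π / 2))..(π / 2), deriv h s ^ 2 := by
  have hle : -(π / 2) ≤ π / 2 := by linarith [Real.pi_pos]
  have hcos : ∀ s ∈ Icc (-(π / 2)) (π / 2), Real.cos (l * s) ≠ 0 := fun s hs => by
    refine (Real.cos_pos_of_mem_Ioo ⟨?_, ?_⟩).ne' <;>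
      nlinarith [hs.1, hs.2, hl.1, hl.2, Real.pi_pos]
  have hq : AbsolutelyContinuousOnInterval (fun s => l * Real.tan (l * s)) (-(π / 2)) (π / 2) := by
    refine ContDiffOn.absolutelyContinuousOnInterval fun s hs => ?_
    rw [uIcc_of_le hle] at hs
    exact (contDiffAt_const.mul ((Real.contDiffAt_tan.2 (hcos s hs)).comp s
      (contDiffAt_const.mul contDiffAt_id))).contDiffWithinAt
  have hac : AbsolutelyContinuousOnInterval h (-(π / 2)) (π / 2) :=
    hh.lipschitzOnWith.absolutelyContinuousOnInterval
  have hprod := (hac.fun_mul hac).fun_mul hq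
  have hboundary := hprod.integral_deriv_eq_sub
  simp only [h₁, h₂, mul_zero, zero_mul, sub_zero] at hboundary
  have hsq := intervalIntegrable_deriv_sq_of_lipschitzWith hh (-(π / 2)) (π / 2)
  have hmono : ∫ s in (-(π / 2))..(π / 2), l ^ 2 * h s ^ 2 ≤ ∫ s in (-(π / 2))..(π / 2),
      (deriv h s ^ 2 + deriv (fun s => h s * h s * (l * Real.tan (l * s))) s) := by
    refine intervalIntegral.integral_mono_ae_restrict hle
      (((hh.continuous.pow 2).intervalIntegrable _ _).const_mul _)
      (hsq.add hprod.intervalIntegrable_deriv) ?_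
    filter_upwards [ae_restrict_of_ae hh.ae_differentiableAt, ae_restrict_mem measurableSet_Icc]
      with s hs hsm
    have hd : deriv (fun s => h s * h s * (l * Real.tan (l * s))) s = _ :=
      ((hs.hasDerivAt.mul hs.hasDerivAt).mul (hasDerivAt_mul_tan_mul (hcos s hsm))).deriv
    simp only [hd, Pi.mul_apply]
    linarith [sq_nonneg (deriv h s + h s * (l * Real.tan (l * s)))]
  rwa [intervalIntegral.integral_add hsq hprod.intervalIntegrable_deriv, hboundary, add_zero,
    intervalIntegral.integral_const_mul] at hmono

lemma integral_sq_le_integral_deriv_sq_of_dirichlet (hh : LipschitzWith K h)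
    (h₁ : h (-(π / 2)) = 0) (h₂ : h (π / 2) = 0) :
    ∫ s in (-(π / 2))..(π / 2), h s ^ 2 ≤ ∫ s in (-(π / 2))..(π / 2), deriv h s ^ 2 := by
  have hlim : Tendsto (fun l : ℝ => l ^ 2 * ∫ s in (-(π / 2))..(π / 2), h s ^ 2) (𝓝[<] 1)
      (𝓝 (1 ^ 2 * ∫ s in (-(π / 2))..(π / 2), h s ^ 2)) :=
    (Continuous.tendsto (by fun_prop) 1).mono_left nhdsWithin_le_nhds
  rw [one_pow, one_mul] at hlim
  refine le_of_tendsto hlim ?_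
  filter_upwards [Ioo_mem_nhdsLT zero_lt_one] with l hl
  exact sq_mul_integral_sq_le_of_dirichlet hh h₁ h₂ hl

lemma exists_eq_zero_of_antiperiodic (hc : Continuous h) {T : ℝ} (hT : h.Antiperiodic T) :
    ∃ a, h a = 0 := by
  have hzero : (0 : ℝ) ∈ uIcc (h 0) (h T) := by
    rw [← zero_add T, hT 0, mem_uIcc]
    rcases le_total (h 0) 0 with h0 | h0
    · exact Or.inl ⟨h0, neg_nonneg.2 h0⟩
    · exact Or.inr ⟨neg_nonpos.2 h0, h0⟩
  obtain ⟨a, -, ha⟩ := intermediate_value_uIcc hc.continuousOn hzero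
  exact ⟨a, ha⟩

lemma integral_sq_le_integral_deriv_sq_of_antiperiodic (hh : LipschitzWith K h)
    (hπ : h.Antiperiodic π) : ∫ s in 0..π, h s ^ 2 ≤ ∫ s in 0..π, deriv h s ^ 2 := by
  obtain ⟨a, ha⟩ := exists_eq_zero_of_antiperiodic hh.continuous hπ
  have hderiv (s : ℝ) : deriv h (s + π) = -deriv h s := by
    rw [← deriv_comp_add_const]
    simp only [hπ _]
    exact deriv.fun_neg
  have hperiod : (fun s => h s ^ 2).Periodic π := fun s => by simp only [hπ s, neg_sq]
  have hperiod' : (fun s => deriv h s ^ 2).Periodic π := fun s => by simp only [hderiv, neg_sq]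
  have hshift {f : ℝ → ℝ} (hf : f.Periodic π) :
      ∫ s in (-(π / 2))..(π / 2), f (s + (a + π / 2)) = ∫ s in 0..π, f s := by
    rw [intervalIntegral.integral_comp_add_right, ← zero_add π, hf.intervalIntegral_add_eq 0 a]
    congr 1 <;> ring
  have hLip : LipschitzWith K fun s => h (s + (a + π / 2)) :=
    (hh.comp (isometry_add_right (a + π / 2)).lipschitz).weaken (mul_one K).le
  have hD := integral_sq_le_integral_deriv_sq_of_dirichlet hLip
    (by rw [← ha]; ring_nf) (by rw [show π / 2 + (a + π / 2) = a + π by ring, hπ, ha, neg_zero])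
  simpa only [deriv_comp_add_const, hshift hperiod, hshift hperiod'] using hD

end Wirtinger

section Gaussian

open ProbabilityTheory
open Real (exp)
open scoped Real

variable {E : Type*} [NormedAddCommGroup E] [InnerProductSpace ℝ E] [FiniteDimensional ℝ E]
  [MeasurableSpace E] [BorelSpace E]

/-- The density of the standard Gaussian measure of a Euclidean space with respect to Lebesgue
measure. -/
noncomputable def stdGaussianPDFReal (x : E) : ℝ :=
  ((2 * π) ^ (Module.finrank ℝ E / 2 : ℝ))⁻¹ * exp (-‖x‖ ^ 2 / 2)

omit [FiniteDimensional ℝ E] [MeasurableSpace E] [BorelSpace E] in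
lemma stdGaussianPDFReal_pos (x : E) : 0 < stdGaussianPDFReal x := by
  have := Real.pi_pos
  unfold stdGaussianPDFReal
  positivity

omit [FiniteDimensional ℝ E] in
lemma measurable_stdGaussianPDFReal : Measurable (stdGaussianPDFReal (E := E)) := by
  unfold stdGaussianPDFReal
  fun_prop

lemma integrable_exp_neg_norm_sq_div_two : Integrable fun x : E => exp (-‖x‖ ^ 2 / 2) := by
  have h := GaussianFourier.integrable_cexp_neg_mul_sq_norm_add (V := E) (b := 1 / 2)
    (by norm_num) 0 0
  refine h.re.congr (Eventually.of_forall fun x => ?_)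
  have hcast : -(1 / 2) * (‖x‖ : ℂ) ^ 2 + 0 * (inner ℝ (0 : E) x : ℝ) =
      ((-‖x‖ ^ 2 / 2 : ℝ) : ℂ) := by
    push_cast
    ring
  simp only [hcast, ← Complex.ofReal_exp]
  rfl

lemma charFun_withDensity_stdGaussianPDFReal (t : E) :
    charFun (volume.withDensity fun x : E => ENNReal.ofReal (stdGaussianPDFReal x)) t =
      Complex.exp (-‖t‖ ^ 2 / 2) := by
  have hpos : 0 < (2 * π) ^ (Module.finrank ℝ E / 2 : ℝ) := by
    have := Real.pi_pos
    positivity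
  have hintegrand (x : E) : (ENNReal.ofReal (stdGaussianPDFReal x)).toReal •
      Complex.exp ((inner ℝ x t : ℝ) * Complex.I) =
      (((2 * π) ^ (Module.finrank ℝ E / 2 : ℝ) : ℝ) : ℂ)⁻¹ *
        Complex.exp (-(1 / 2) * ‖x‖ ^ 2 + Complex.I * (inner ℝ t x : ℝ)) := by
    rw [ENNReal.toReal_ofReal (stdGaussianPDFReal_pos x).le, real_inner_comm, Complex.exp_add,
      Complex.real_smul, stdGaussianPDFReal]
    push_cast
    ring_nf
  have hconst : ((π : ℂ) / (1 / 2)) ^ (Module.finrank ℝ E / 2 : ℂ) =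
      (((2 * π) ^ (Module.finrank ℝ E / 2 : ℝ) : ℝ) : ℂ) := by
    rw [Complex.ofReal_cpow (by positivity)]
    push_cast
    ring_nf
  rw [charFun_apply, integral_withDensity_eq_integral_toReal_smul
    measurable_stdGaussianPDFReal.ennreal_ofReal (by simp)]
  simp_rw [hintegrand]
  rw [integral_const_mul, GaussianFourier.integral_cexp_neg_mul_sq_norm_add (by norm_num), hconst,
    inv_mul_cancel_left₀ (Complex.ofReal_ne_zero.2 hpos.ne'), Complex.I_sq]
  ring_nf

lemma stdGaussian_eq_withDensity : stdGaussian E =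
    volume.withDensity fun x => ENNReal.ofReal (stdGaussianPDFReal x) := by
  have : IsFiniteMeasure (volume.withDensity fun x : E => ENNReal.ofReal (stdGaussianPDFReal x)) :=
    isFiniteMeasure_withDensity_ofReal (integrable_exp_neg_norm_sq_div_two.const_mul _).2
  refine Measure.ext_of_charFun (funext fun t => ?_)
  rw [charFun_stdGaussian, charFun_withDensity_stdGaussianPDFReal]

lemma stdGaussian_absolutelyContinuous : stdGaussian E ≪ volume := by
  rw [stdGaussian_eq_withDensity]
  exact withDensity_absolutelyContinuous _ _

lemma absolutelyContinuous_stdGaussian : (volume : Measure E) ≪ stdGaussian E := by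
  rw [stdGaussian_eq_withDensity]
  exact withDensity_absolutelyContinuous'
    measurable_stdGaussianPDFReal.ennreal_ofReal.aemeasurable
    (Eventually.of_forall fun x => (ENNReal.ofReal_pos.2 (stdGaussianPDFReal_pos x)).ne')

lemma integral_stdGaussian (F : E → ℝ) :
    ∫ x, F x ∂stdGaussian E = ∫ x, stdGaussianPDFReal x * F x := by
  rw [stdGaussian_eq_withDensity, integral_withDensity_eq_integral_toReal_smul
    measurable_stdGaussianPDFReal.ennreal_ofReal (by simp)]
  simp only [ENNReal.toReal_ofReal (stdGaussianPDFReal_pos _).le, smul_eq_mul]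

lemma measurable_gradient (f : E → ℝ) : Measurable (gradient f) :=
  (InnerProductSpace.toDual ℝ E).symm.continuous.measurable.comp (measurable_fderiv ℝ f)

lemma memLp_two_stdGaussian_of_lipschitzWith {f : E → ℝ} {K : ℝ≥0} (hf : LipschitzWith K f) :
    MemLp f 2 (stdGaussian E) := by
  have hid : MemLp (fun x : E => x) 2 (stdGaussian E) := IsGaussian.memLp_two_id
  have hbound : MemLp (fun x : E => ‖f 0‖ + K * ‖x‖) 2 (stdGaussian E) :=
    (memLp_const ‖f 0‖).add (hid.norm.const_mul (K : ℝ))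
  refine hbound.mono' hf.continuous.aestronglyMeasurable (Eventually.of_forall fun x => ?_)
  calc ‖f x‖ ≤ ‖f 0‖ + ‖f x - f 0‖ := norm_le_norm_add_norm_sub' _ _
    _ ≤ ‖f 0‖ + K * ‖x‖ := by simpa using hf.norm_sub_le x 0

lemma memLp_gradient_of_lipschitzWith {f : E → ℝ} {K : ℝ≥0} (hf : LipschitzWith K f)
    (μ : Measure E) [IsFiniteMeasure μ] (p : ℝ≥0∞) : MemLp (gradient f) p μ :=
  MemLp.of_bound (measurable_gradient f).aestronglyMeasurable K
    (Eventually.of_forall (norm_gradient_le_of_lipschitzWith hf))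

lemma ae_differentiableAt_stdGaussian {f : E → ℝ} {K : ℝ≥0} (hf : LipschitzWith K f) :
    ∀ᵐ x ∂stdGaussian E, DifferentiableAt ℝ f x :=
  stdGaussian_absolutelyContinuous.ae_le hf.ae_differentiableAt

end Gaussian

section Poincare

open ProbabilityTheory
open scoped Real

lemma lintegral_enorm_sq_eq_ofReal_integral {α F : Type*} [MeasurableSpace α]
    [NormedAddCommGroup F] {μ : Measure α} {f : α → F} (hf : MemLp f 2 μ) :
    ∫⁻ x, ‖f x‖ₑ ^ 2 ∂μ = ENNReal.ofReal (∫ x, ‖f x‖ ^ 2 ∂μ) := by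
  rw [ofReal_integral_eq_lintegral_ofReal ((memLp_two_iff_integrable_sq_norm hf.1).1 hf)
    (Eventually.of_forall fun x => sq_nonneg _)]
  simp only [ENNReal.ofReal_pow (norm_nonneg _), ofReal_norm]

lemma lintegral_enorm_sq_le_lintegral_enorm_deriv_sq {h : ℝ → ℝ} {K : ℝ≥0}
    (hh : LipschitzWith K h) (hπ : h.Antiperiodic π) :
    ∫⁻ s in Ioc 0 π, ‖h s‖ₑ ^ 2 ≤ ∫⁻ s in Ioc 0 π, ‖deriv h s‖ₑ ^ 2 := by
  have hmem : MemLp h 2 (volume.restrict (Ioc 0 π)) :=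
    (memLp_two_iff_integrable_sq hh.continuous.aestronglyMeasurable).2
      ((hh.continuous.pow 2).integrableOn_Icc.mono_set Ioc_subset_Icc_self)
  have hmem' : MemLp (deriv h) 2 (volume.restrict (Ioc 0 π)) :=
    MemLp.of_bound (measurable_deriv h).aestronglyMeasurable K
      (Eventually.of_forall fun _ => norm_deriv_le_of_lipschitz hh)
  rw [lintegral_enorm_sq_eq_ofReal_integral hmem, lintegral_enorm_sq_eq_ofReal_integral hmem']
  simp only [Real.norm_eq_abs, sq_abs, ← intervalIntegral.integral_of_le Real.pi_pos.le]
  exact ENNReal.ofReal_le_ofReal (integral_sq_le_integral_deriv_sq_of_antiperiodic hh hπ)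

variable {E : Type*} [NormedAddCommGroup E] [InnerProductSpace ℝ E]

lemma hasDerivAt_rotation_fst (p : E × E) (θ : ℝ) :
    HasDerivAt (fun θ => (ContinuousLinearMap.rotation θ p).1)
      (ContinuousLinearMap.rotation θ p).2 θ := by
  simp only [ContinuousLinearMap.rotation_apply]
  exact ((Real.hasDerivAt_cos θ).smul_const p.1).add ((Real.hasDerivAt_sin θ).smul_const p.2)

lemma lipschitzWith_rotation_fst (p : E × E) :
    LipschitzWith (‖p.1‖₊ + ‖p.2‖₊) fun θ => (ContinuousLinearMap.rotation θ p).1 := by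
  refine lipschitzWith_of_nnnorm_deriv_le (𝕜 := ℝ)
    (fun θ => (hasDerivAt_rotation_fst p θ).differentiableAt) fun θ => ?_
  rw [(hasDerivAt_rotation_fst p θ).deriv, ContinuousLinearMap.rotation_apply]
  refine (nnnorm_add_le _ _).trans (add_le_add ?_ ?_) <;>
    rw [nnnorm_smul] <;> refine mul_le_of_le_one_left' ?_ <;> rw [← NNReal.coe_le_coe]
  · simpa using Real.abs_sin_le_one θ
  · simpa using Real.abs_cos_le_one θ

lemma antiperiodic_comp_rotation_fst {g : E → ℝ} (hodd : g.Odd) (p : E × E) :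
    Function.Antiperiodic (fun θ => g (ContinuousLinearMap.rotation θ p).1) π := fun θ => by
  simp only [← hodd _, ContinuousLinearMap.rotation_apply, Real.cos_add_pi, Real.sin_add_pi,
    neg_smul, neg_add]

variable [FiniteDimensional ℝ E] [MeasurableSpace E] [BorelSpace E]

lemma measurable_rotation :
    Measurable fun q : (E × E) × ℝ => ContinuousLinearMap.rotation q.2 q.1 := by
  simp only [ContinuousLinearMap.rotation_apply]
  fun_prop

lemma measurePreserving_rotation (θ : ℝ) :
    MeasurePreserving (ContinuousLinearMap.rotation (E := E) θ)
      ((stdGaussian E).prod (stdGaussian E)) ((stdGaussian E).prod (stdGaussian E)) :=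
  ⟨by fun_prop, IsGaussian.map_rotation_eq_self (by simp) θ⟩

lemma lintegral_enorm_inner_sq_stdGaussian (a : E) :
    ∫⁻ z, ‖(inner ℝ a z : ℝ)‖ₑ ^ 2 ∂stdGaussian E = ‖a‖ₑ ^ 2 := by
  have hmem : MemLp (innerSL ℝ a) 2 (stdGaussian E) := IsGaussian.memLp_dual _ _ _ (by simp)
  have hvar := variance_dual_stdGaussian (innerSL ℝ a)
  rw [variance_of_integral_eq_zero (by fun_prop) (integral_strongDual_stdGaussian _),
    innerSL_apply_norm] at hvar
  rw [← ofReal_norm, ← ENNReal.ofReal_pow (norm_nonneg a), ← hvar]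
  simpa using lintegral_enorm_sq_eq_ofReal_integral hmem

lemma lintegral_lintegral_rotation {F : E × E → ℝ≥0∞} (hF : Measurable F) :
    ∫⁻ p, (∫⁻ θ in Ioc 0 π, F (ContinuousLinearMap.rotation θ p))
        ∂(stdGaussian E).prod (stdGaussian E) =
      (∫⁻ p, F p ∂(stdGaussian E).prod (stdGaussian E)) * ENNReal.ofReal π := by
  have hmeas : Measurable (Function.uncurry fun (p : E × E) θ =>
      F (ContinuousLinearMap.rotation θ p)) := hF.comp measurable_rotation
  rw [lintegral_lintegral_swap hmeas.aemeasurable]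
  simp only [(measurePreserving_rotation _).lintegral_comp hF, lintegral_const,
    Measure.restrict_apply_univ, Real.volume_Ioc, sub_zero]

lemma ae_ae_differentiableAt_rotation_fst {g : E → ℝ} {K : ℝ≥0} (hg : LipschitzWith K g) :
    ∀ᵐ p ∂(stdGaussian E).prod (stdGaussian E), ∀ᵐ θ ∂volume.restrict (Ioc 0 π),
      DifferentiableAt ℝ g (ContinuousLinearMap.rotation θ p).1 := by
  have hmeas : MeasurableSet {q : (E × E) × ℝ |
      DifferentiableAt ℝ g (ContinuousLinearMap.rotation q.2 q.1).1} :=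
    measurable_rotation.fst (measurableSet_of_differentiableAt ℝ g)
  rw [Measure.ae_ae_comm hmeas]
  exact Eventually.of_forall fun θ => (measurePreserving_rotation θ).quasiMeasurePreserving.ae
    (Measure.quasiMeasurePreserving_fst.ae (ae_differentiableAt_stdGaussian hg))

-- Oddness of `g` makes `θ ↦ g (cos θ • x + sin θ • y)` antiperiodic, so the Wirtinger inequality
-- applies along almost every orbit of the rotations, which preserve the product measure.
lemma lintegral_enorm_sq_le_of_odd {g : E → ℝ} {K : ℝ≥0} (hg : LipschitzWith K g)
    (hodd : g.Odd) :
    ∫⁻ z, ‖g z‖ₑ ^ 2 ∂stdGaussian E ≤ ∫⁻ z, ‖gradient g z‖ₑ ^ 2 ∂stdGaussian E := by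
  set γ := stdGaussian E with hγ
  have hG : Measurable fun p : E × E => ‖(inner ℝ (gradient g p.1) p.2 : ℝ)‖ₑ ^ 2 :=
    ((((measurable_gradient g).comp measurable_fst).inner measurable_snd).enorm).pow_const 2
  have hH : Measurable fun p : E × E => ‖g p.1‖ₑ ^ 2 :=
    (hg.continuous.comp continuous_fst).measurable.enorm.pow_const 2
  have hleft : ∫⁻ z, ‖g z‖ₑ ^ 2 ∂γ = ∫⁻ p, ‖g p.1‖ₑ ^ 2 ∂γ.prod γ := by
    simp [lintegral_prod _ hH.aemeasurable]
  have hright : ∫⁻ z, ‖gradient g z‖ₑ ^ 2 ∂γ =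
      ∫⁻ p, ‖(inner ℝ (gradient g p.1) p.2 : ℝ)‖ₑ ^ 2 ∂γ.prod γ := by
    simp only [lintegral_prod _ hG.aemeasurable, hγ, lintegral_enorm_inner_sq_stdGaussian]
  rw [hleft, hright, ← ENNReal.mul_le_mul_iff_left (ENNReal.ofReal_pos.2 Real.pi_pos).ne'
    ENNReal.ofReal_ne_top, ← lintegral_lintegral_rotation hG, ← lintegral_lintegral_rotation hH]
  refine lintegral_mono_ae ?_
  filter_upwards [ae_ae_differentiableAt_rotation_fst hg] with p hp
  refine (lintegral_enorm_sq_le_lintegral_enorm_deriv_sq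
    (hg.comp (lipschitzWith_rotation_fst p)) (antiperiodic_comp_rotation_fst hodd p)).trans_eq ?_
  refine lintegral_congr_ae (hp.mono fun θ hθ => ?_)
  have hd : deriv (g ∘ fun θ => (ContinuousLinearMap.rotation θ p).1) θ = _ :=
    (hθ.hasFDerivAt.comp_hasDerivAt θ (hasDerivAt_rotation_fst p θ)).deriv
  simp only [hd, inner_gradient_left]

omit [MeasurableSpace E] [BorelSpace E] in
lemma gradient_comp_add_sub_comp_sub {f : E → ℝ} {c : ℝ} {w z : E}
    (hadd : DifferentiableAt ℝ f (w + c • z)) (hsub : DifferentiableAt ℝ f (w - c • z)) :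
    gradient (fun z => f (w + c • z) - f (w - c • z)) z =
      c • (gradient f (w + c • z) + gradient f (w - c • z)) := by
  have hscale : HasFDerivAt (fun z : E => c • z) (c • ContinuousLinearMap.id ℝ E) z :=
    (hasFDerivAt_id z).const_smul c
  have hd : HasFDerivAt (fun z => f (w + c • z) - f (w - c • z)) _ z :=
    (hadd.hasFDerivAt.comp z (hscale.const_add w)).sub
      (hsub.hasFDerivAt.comp z (hscale.const_sub w))
  refine gradient_eq_of_fderiv_eq fun v => ?_
  simp [hd.fderiv, inner_smul_left, inner_add_left, inner_gradient_left]

lemma lintegral_enorm_comp_add_sub_comp_sub_sq_le {f : E → ℝ} {K : ℝ≥0} (hf : LipschitzWith K f)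
    (c : ℝ) (w : E) (hd : ∀ᵐ z ∂stdGaussian E, DifferentiableAt ℝ f (w - c • z) ∧
      DifferentiableAt ℝ f (w + c • z)) :
    ∫⁻ z, ‖f (w + c • z) - f (w - c • z)‖ₑ ^ 2 ∂stdGaussian E ≤
      ∫⁻ z, ‖c • (gradient f (w + c • z) + gradient f (w - c • z))‖ₑ ^ 2 ∂stdGaussian E := by
  have hLip := (hf.comp ((LipschitzWith.const w).add (lipschitzWith_smul c))).sub
    (hf.comp ((LipschitzWith.const w).sub (lipschitzWith_smul c)))
  refine (lintegral_enorm_sq_le_of_odd hLip fun z => ?_).trans_eq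
    (lintegral_congr_ae (hd.mono fun z hz => ?_))
  · simp only [Function.comp_apply, smul_neg, sub_neg_eq_add, ← sub_eq_add_neg, neg_sub]
  · exact congr(‖$(gradient_comp_add_sub_comp_sub hz.2 hz.1)‖ₑ ^ 2)

omit [FiniteDimensional ℝ E] [MeasurableSpace E] [BorelSpace E] in
lemma rotation_neg_pi_div_four (p : E × E) : ContinuousLinearMap.rotation (-(π / 4)) p =
    ((√2 / 2) • p.1 - (√2 / 2) • p.2, (√2 / 2) • p.1 + (√2 / 2) • p.2) := by
  rw [ContinuousLinearMap.rotation_apply, Real.cos_neg, Real.sin_neg, Real.cos_pi_div_four,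
    Real.sin_pi_div_four, neg_neg, neg_smul, sub_eq_add_neg]

-- After rotating by `-π / 4`, the difference is `f (w + c • z) - f (w - c • z)`, odd in `z`.
lemma lintegral_enorm_sub_sq_le {f : E → ℝ} {K : ℝ≥0} (hf : LipschitzWith K f) :
    ∫⁻ p, ‖f p.2 - f p.1‖ₑ ^ 2 ∂(stdGaussian E).prod (stdGaussian E) ≤
      ∫⁻ p, ‖(√2 / 2) • (gradient f p.2 + gradient f p.1)‖ₑ ^ 2
        ∂(stdGaussian E).prod (stdGaussian E) := by
  have hrot := measurePreserving_rotation (E := E) (-(π / 4))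
  have hleft : Measurable fun p : E × E => ‖f p.2 - f p.1‖ₑ ^ 2 :=
    ((hf.continuous.comp continuous_snd).sub
      (hf.continuous.comp continuous_fst)).measurable.enorm.pow_const 2
  have hright : Measurable fun p : E × E =>
      ‖(√2 / 2) • (gradient f p.2 + gradient f p.1)‖ₑ ^ 2 :=
    ((((measurable_gradient f).comp measurable_snd).add
      ((measurable_gradient f).comp measurable_fst)).const_smul _).enorm.pow_const 2
  have hleft_rot : Measurable fun p => ‖f (ContinuousLinearMap.rotation (-(π / 4)) p).2 -
      f (ContinuousLinearMap.rotation (-(π / 4)) p).1‖ₑ ^ 2 := hleft.comp hrot.measurable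
  have hright_rot : Measurable fun p =>
      ‖(√2 / 2) • (gradient f (ContinuousLinearMap.rotation (-(π / 4)) p).2 +
        gradient f (ContinuousLinearMap.rotation (-(π / 4)) p).1)‖ₑ ^ 2 :=
    hright.comp hrot.measurable
  have hd := Measure.ae_ae_of_ae_prod <| hrot.quasiMeasurePreserving.ae <|
    (Measure.quasiMeasurePreserving_fst.ae (ae_differentiableAt_stdGaussian hf)).and
      (Measure.quasiMeasurePreserving_snd.ae (ae_differentiableAt_stdGaussian hf))
  rw [← hrot.lintegral_comp hleft, ← hrot.lintegral_comp hright,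
    lintegral_prod _ hleft_rot.aemeasurable,
    lintegral_prod _ hright_rot.aemeasurable]
  refine lintegral_mono_ae (hd.mono fun w hw => ?_)
  simp only [rotation_neg_pi_div_four] at hw ⊢
  exact lintegral_enorm_comp_add_sub_comp_sub_sq_le hf _ _ hw

section Prod

variable {α F : Type*} [MeasurableSpace α] {μ : Measure α} [NormedAddCommGroup F]
  [InnerProductSpace ℝ F] {X : α → F}

lemma integrable_inner_of_memLp {Y : α → F} (hX : MemLp X 2 μ) (hY : MemLp Y 2 μ) :
    Integrable (fun x => (inner ℝ (X x) (Y x) : ℝ)) μ :=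
  (hX.norm.integrable_mul hY.norm).mono' (hX.1.inner hY.1)
    (Eventually.of_forall fun x => abs_real_inner_le_norm (X x) (Y x))

lemma integral_norm_add_smul_sq {Y : α → F} (hX : MemLp X 2 μ) (hY : MemLp Y 2 μ) (c : ℝ) :
    ∫ x, ‖X x + c • Y x‖ ^ 2 ∂μ =
      ∫ x, ‖X x‖ ^ 2 ∂μ + (c * (2 * ∫ x, inner ℝ (X x) (Y x) ∂μ) +
        c ^ 2 * ∫ x, ‖Y x‖ ^ 2 ∂μ) := by
  have hX_sq := (memLp_two_iff_integrable_sq_norm hX.1).1 hX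
  have hY_sq := ((memLp_two_iff_integrable_sq_norm hY.1).1 hY).const_mul (c ^ 2)
  have hcross := (integrable_inner_of_memLp hX hY).const_mul (2 * c)
  have hlower : Integrable (fun x => 2 * c * inner ℝ (X x) (Y x) + c ^ 2 * ‖Y x‖ ^ 2) μ :=
    hcross.add hY_sq
  have hexpand (x : α) : ‖X x + c • Y x‖ ^ 2 =
      ‖X x‖ ^ 2 + (2 * c * inner ℝ (X x) (Y x) + c ^ 2 * ‖Y x‖ ^ 2) := by
    rw [norm_add_sq_real, inner_smul_right, norm_smul, mul_pow, Real.norm_eq_abs, sq_abs]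
    ring
  simp_rw [hexpand]
  rw [integral_add hX_sq hlower, integral_add hcross hY_sq, integral_const_mul,
    integral_const_mul]
  ring

variable [IsProbabilityMeasure μ] [CompleteSpace F]

lemma integral_prod_inner (hX : MemLp X 2 μ) :
    ∫ p : α × α, (inner ℝ (X p.2) (X p.1) : ℝ) ∂μ.prod μ = ‖∫ x, X x ∂μ‖ ^ 2 := by
  have hfst : MemLp (fun p : α × α => X p.1) 2 (μ.prod μ) :=
    hX.comp_measurePreserving measurePreserving_fst
  have hsnd : MemLp (fun p : α × α => X p.2) 2 (μ.prod μ) :=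
    hX.comp_measurePreserving measurePreserving_snd
  have hint := hX.integrable one_le_two
  rw [integral_prod _ (integrable_inner_of_memLp hsnd hfst), ← real_inner_self_eq_norm_sq,
    ← integral_inner hint]
  simp only [real_inner_comm, integral_inner hint]

lemma integral_prod_norm_add_smul_sq (hX : MemLp X 2 μ) (c : ℝ) :
    ∫ p : α × α, ‖X p.2 + c • X p.1‖ ^ 2 ∂μ.prod μ =
      (1 + c ^ 2) * ∫ x, ‖X x‖ ^ 2 ∂μ + 2 * c * ‖∫ x, X x ∂μ‖ ^ 2 := by
  have hfst : MemLp (fun p : α × α => X p.1) 2 (μ.prod μ) :=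
    hX.comp_measurePreserving measurePreserving_fst
  have hsnd : MemLp (fun p : α × α => X p.2) 2 (μ.prod μ) :=
    hX.comp_measurePreserving measurePreserving_snd
  rw [integral_norm_add_smul_sq hsnd hfst, integral_prod_inner hX,
    integral_fun_snd (fun x => ‖X x‖ ^ 2), integral_fun_fst (fun x => ‖X x‖ ^ 2)]
  simp only [probReal_univ, one_smul]
  ring

lemma ae_eq_integral_of_integral_norm_sq_le (hX : MemLp X 2 μ)
    (h : ∫ x, ‖X x‖ ^ 2 ∂μ ≤ ‖∫ x, X x ∂μ‖ ^ 2) : ∀ᵐ x ∂μ, X x = ∫ y, X y ∂μ := by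
  set m := ∫ x, X x ∂μ with hm
  have hdev : ∫ x, ‖X x - m‖ ^ 2 ∂μ = ∫ x, ‖X x‖ ^ 2 ∂μ - ‖m‖ ^ 2 := by
    have hexpand := integral_norm_add_smul_sq hX (memLp_const m) (-1)
    simp_rw [neg_one_smul, ← sub_eq_add_neg, real_inner_comm m] at hexpand
    rw [hexpand, integral_inner (hX.integrable one_le_two), ← hm, real_inner_self_eq_norm_sq]
    simp only [integral_const, probReal_univ, one_smul]
    ring
  have hint : Integrable (fun x => ‖X x - m‖ ^ 2) μ :=
    (memLp_two_iff_integrable_sq_norm (hX.sub (memLp_const m)).1).1 (hX.sub (memLp_const m))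
  have hzero : ∫ x, ‖X x - m‖ ^ 2 ∂μ = 0 :=
    le_antisymm (by linarith) (integral_nonneg fun x => sq_nonneg _)
  refine ((integral_eq_zero_iff_of_nonneg (fun x => sq_nonneg _) hint).1 hzero).mono fun x hx => ?_
  simpa [sub_eq_zero] using hx

end Prod

lemma integral_norm_gradient_add_mul_sq {μ : Measure E} [IsFiniteMeasure μ] (hμ : μ ≪ volume)
    {f g : E → ℝ} {K L : ℝ≥0} (hf : LipschitzWith K f) (hg : LipschitzWith L g) (t : ℝ) :
    ∫ x, ‖gradient (fun x => f x + t * g x) x‖ ^ 2 ∂μ =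
      ∫ x, ‖gradient f x‖ ^ 2 ∂μ + (t * (2 * ∫ x, inner ℝ (gradient f x) (gradient g x) ∂μ) +
        t ^ 2 * ∫ x, ‖gradient g x‖ ^ 2 ∂μ) := by
  rw [← integral_norm_add_smul_sq (memLp_gradient_of_lipschitzWith hf μ 2)
    (memLp_gradient_of_lipschitzWith hg μ 2)]
  refine integral_congr_ae (hμ.ae_le ?_)
  filter_upwards [hf.ae_differentiableAt, hg.ae_differentiableAt] with x hfx hgx
  rw [gradient_fun_add hfx (hgx.const_mul t), gradient_const_mul]

lemma two_mul_integral_sq_le {f : E → ℝ} {K : ℝ≥0} (hf : LipschitzWith K f)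
    (hmean : ∫ x, f x ∂stdGaussian E = 0) :
    2 * ∫ x, f x ^ 2 ∂stdGaussian E ≤
      ∫ x, ‖gradient f x‖ ^ 2 ∂stdGaussian E + ‖∫ x, gradient f x ∂stdGaussian E‖ ^ 2 := by
  have hmem := memLp_two_stdGaussian_of_lipschitzWith hf
  have hgrad := memLp_gradient_of_lipschitzWith hf (stdGaussian E) 2
  have hsub : MemLp (fun p : E × E => f p.2 - f p.1) 2 ((stdGaussian E).prod (stdGaussian E)) :=
    (hmem.comp_measurePreserving measurePreserving_snd).sub
      (hmem.comp_measurePreserving measurePreserving_fst)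
  have hadd : MemLp (fun p : E × E => (√2 / 2) • (gradient f p.2 + gradient f p.1)) 2
      ((stdGaussian E).prod (stdGaussian E)) :=
    ((hgrad.comp_measurePreserving measurePreserving_snd).add
      (hgrad.comp_measurePreserving measurePreserving_fst)).const_smul _
  have hle := lintegral_enorm_sub_sq_le hf
  rw [lintegral_enorm_sq_eq_ofReal_integral hsub, lintegral_enorm_sq_eq_ofReal_integral hadd,
    ENNReal.ofReal_le_ofReal_iff (integral_nonneg fun p => sq_nonneg _)] at hle
  have hhalf : ‖√2 / 2‖ ^ 2 = (1 / 2 : ℝ) := by norm_num [div_pow]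
  have hsub_sq := integral_prod_norm_add_smul_sq hmem (-1)
  have hadd_sq := integral_prod_norm_add_smul_sq hgrad 1
  simp only [neg_smul, one_smul, ← sub_eq_add_neg, hmean, norm_zero] at hsub_sq hadd_sq
  simp only [norm_smul, mul_pow, hhalf, integral_const_mul, hsub_sq, hadd_sq] at hle
  simp only [Real.norm_eq_abs, sq_abs] at hle
  linarith

lemma exists_eq_add_inner_of_integral_norm_gradient_sq_le {f : E → ℝ} {K : ℝ≥0}
    (hf : LipschitzWith K f) (hmean : ∫ x, f x ∂stdGaussian E = 0)
    (hle : ∫ x, ‖gradient f x‖ ^ 2 ∂stdGaussian E ≤ ∫ x, f x ^ 2 ∂stdGaussian E) :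
    ∃ a : E, ∀ x, f x = f 0 + inner ℝ a x := by
  have hconst := ae_eq_integral_of_integral_norm_sq_le
    (memLp_gradient_of_lipschitzWith hf (stdGaussian E) 2)
    (by linarith [two_mul_integral_sq_le hf hmean])
  exact ⟨_, eq_add_inner_of_ae_gradient_eq hf (absolutelyContinuous_stdGaussian.ae_le hconst)⟩

end Poincare

section PosHomogeneous

variable {E : Type*} [NormedAddCommGroup E] [InnerProductSpace ℝ E]

/-- Positive `1`-homogeneity: `u (t x) = t u(x)` for `t > 0`. Nothing is required at `t = 0`, but
`u 0 = 0` follows. -/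
def IsPosHomogeneous (u : E → ℝ) : Prop :=
  ∀ t : ℝ, 0 < t → ∀ x, u (t • x) = t * u x

namespace IsPosHomogeneous

variable {u : E → ℝ}

lemma map_zero (hu : IsPosHomogeneous u) : u 0 = 0 := by
  have h := hu 2 two_pos 0
  rw [smul_zero] at h
  linarith

lemma exists_lipschitzWith (hu : IsPosHomogeneous u) (hl : LocallyLipschitz u) :
    ∃ K, LipschitzWith K u := by
  obtain ⟨K, s, hs, hK⟩ := hl 0
  refine ⟨K, LipschitzWith.of_dist_le_mul fun x y => ?_⟩
  obtain ⟨t, ht, htx, hty⟩ : ∃ t : ℝ, 0 < t ∧ t • x ∈ s ∧ t • y ∈ s := by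
    have hscale (z : E) : ∀ᶠ t : ℝ in 𝓝[>] 0, t • z ∈ s :=
      ((continuous_id.smul continuous_const).tendsto' (0 : ℝ) (0 : E) (zero_smul ℝ z)).mono_left
        nhdsWithin_le_nhds hs
    exact (eventually_mem_nhdsWithin.and ((hscale x).and (hscale y))).exists
  have h := hK.dist_le_mul _ htx _ hty
  rw [hu t ht, hu t ht, dist_smul₀, ← smul_eq_mul, ← smul_eq_mul, dist_smul₀,
    mul_left_comm] at h
  exact le_of_mul_le_mul_left h (norm_pos_iff.2 ht.ne')

lemma inner_gradient_self [CompleteSpace E] (hu : IsPosHomogeneous u) {x : E}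
    (hd : DifferentiableAt ℝ u x) : inner ℝ (gradient u x) x = u x := by
  have hline : HasDerivAt (fun t : ℝ => t • x) x 1 := by
    simpa using (hasDerivAt_id (1 : ℝ)).smul_const x
  have hcomp : HasDerivAt (fun t : ℝ => u (t • x)) (fderiv ℝ u x x) 1 :=
    HasFDerivAt.comp_hasDerivAt (1 : ℝ) (by simpa using hd.hasFDerivAt) hline
  have hlin : HasDerivAt (fun t : ℝ => t * u x) (u x) 1 := by
    simpa using (hasDerivAt_id (1 : ℝ)).mul_const (u x)
  rw [inner_gradient_left]
  exact hcomp.unique (hlin.congr_of_eventuallyEq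
    ((eventually_gt_nhds one_pos).mono fun t ht => hu t ht x))

end IsPosHomogeneous

end PosHomogeneous

lemma nonneg_of_eventually_nonneg_mul_add_sq_mul {b q : ℝ}
    (h : ∀ᶠ t in 𝓝[>] (0 : ℝ), 0 ≤ t * b + t ^ 2 * q) : 0 ≤ b := by
  have hlim : Tendsto (fun t : ℝ => b + t * q) (𝓝[>] 0) (𝓝 b) :=
    (Continuous.tendsto' (by fun_prop) 0 b (by simp)).mono_left nhdsWithin_le_nhds
  refine ge_of_tendsto hlim ?_
  filter_upwards [h, self_mem_nhdsWithin] with t ht htpos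
  exact nonneg_of_mul_nonneg_right (by linarith) htpos

section FirstVariation

variable {n : ℕ} {Ω D : Set (EuclideanSpace ℝ (Fin n))} {V φ : EuclideanSpace ℝ (Fin n) → ℝ}
  {K L : ℝ≥0}

lemma JE_eq_ofReal (hD : volume D ≠ ∞) (hV : LipschitzWith K V) :
    JE D V = ENNReal.ofReal
      ((∫ x in D, ‖gradient V x‖ ^ 2) + volume.real (D ∩ {x | 0 < V x})) := by
  have := isFiniteMeasure_restrict.2 hD
  have hpos : MeasurableSet {x | 0 < V x} :=
    (isOpen_lt continuous_const hV.continuous).measurableSet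
  have hind : (fun x => if 0 < V x then (1 : ℝ≥0∞) else 0) = indicator {x | 0 < V x} 1 := rfl
  rw [JE, lintegral_add_left ((measurable_gradient V).nnnorm.coe_nnreal_ennreal.pow_const 2),
    ENNReal.ofReal_add (integral_nonneg fun x => sq_nonneg _) measureReal_nonneg,
    ← lintegral_enorm_sq_eq_ofReal_integral (memLp_gradient_of_lipschitzWith hV _ 2), hind,
    lintegral_indicator_one hpos, Measure.restrict_apply hpos, inter_comm,
    ofReal_measureReal (measure_inter_ne_top_of_left_ne_top hD)]
  rfl

lemma volume_inter_ball_ne_top (Ω : Set (EuclideanSpace ℝ (Fin n)))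
    (c : EuclideanSpace ℝ (Fin n)) (r : ℝ) : volume (Ω ∩ ball c r) ≠ ∞ :=
  measure_inter_ne_top_of_right_ne_top measure_ball_lt_top.ne

variable {c : EuclideanSpace ℝ (Fin n)} {r : ℝ}

lemma IsMinimizer.integral_add_measureReal_le (hV : IsMinimizer Ω V) (hVl : LipschitzWith K V)
    {v : EuclideanSpace ℝ (Fin n) → ℝ} (hv : LipschitzWith L v) (hv0 : ∀ x, 0 ≤ v x)
    (hne : {x | v x ≠ V x} ⊆ Ω ∩ ball c r) :
    (∫ x in Ω ∩ ball c r, ‖gradient V x‖ ^ 2) + volume.real (Ω ∩ ball c r ∩ {x | 0 < V x}) ≤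
      (∫ x in Ω ∩ ball c r, ‖gradient v x‖ ^ 2) +
        volume.real (Ω ∩ ball c r ∩ {x | 0 < v x}) := by
  have hball := hne.trans inter_subset_right
  have hle := hV.2.2 v hv0 hv.locallyLipschitz (isBounded_ball.subset hball)
    (hne.trans inter_subset_left) c r hball
  have hfin := volume_inter_ball_ne_top Ω c r
  rwa [JE_eq_ofReal hfin hVl, JE_eq_ofReal hfin hv, ENNReal.ofReal_le_ofReal_iff] at hle
  exact add_nonneg (integral_nonneg fun x => sq_nonneg _) measureReal_nonneg

lemma IsMinimizer.integral_inner_gradient_nonneg (hV : IsMinimizer Ω V)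
    (hVl : LipschitzWith K V) (hφ : LipschitzWith L φ)
    (hsupp : Function.support φ ⊆ Ω ∩ ball c r)
    (hnonneg : ∀ᶠ t in 𝓝[>] (0 : ℝ), ∀ x, 0 ≤ V x + t * φ x)
    (hmeas : ∀ᶠ t in 𝓝[>] (0 : ℝ), volume.real (Ω ∩ ball c r ∩ {x | 0 < V x + t * φ x}) ≤
      volume.real (Ω ∩ ball c r ∩ {x | 0 < V x})) :
    0 ≤ ∫ x in Ω ∩ ball c r, inner ℝ (gradient V x) (gradient φ x) := by
  suffices 0 ≤ 2 * ∫ x in Ω ∩ ball c r, inner ℝ (gradient V x) (gradient φ x) by linarith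
  refine nonneg_of_eventually_nonneg_mul_add_sq_mul
    (q := ∫ x in Ω ∩ ball c r, ‖gradient φ x‖ ^ 2) ?_
  filter_upwards [hnonneg, hmeas] with t hnonneg hmeas
  have hne : {x | V x + t * φ x ≠ V x} ⊆ Ω ∩ ball c r := by
    refine Subset.trans (fun x hx => ?_) hsupp
    simp_all
  have hle := hV.integral_add_measureReal_le hVl
    (hVl.add ((lipschitzWith_smul t).comp hφ)) hnonneg hne
  simp only [Function.comp_apply, smul_eq_mul] at hle
  have := isFiniteMeasure_restrict.2 (volume_inter_ball_ne_top Ω c r)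
  rw [integral_norm_gradient_add_mul_sq Measure.restrict_le_self.absolutelyContinuous hVl hφ] at hle
  linarith

lemma IsMinimizer.integral_inner_gradient_nonneg_of_ae_pos (hV : IsMinimizer Ω V)
    (hVl : LipschitzWith K V) (hpos : ∀ᵐ x, 0 < V x) (hφ : LipschitzWith L φ)
    (hsupp : Function.support φ ⊆ Ω ∩ ball c r) (hφ0 : ∀ x, 0 ≤ φ x) :
    0 ≤ ∫ x in Ω ∩ ball c r, inner ℝ (gradient V x) (gradient φ x) := by
  refine hV.integral_inner_gradient_nonneg hVl hφ hsupp ?_ (Eventually.of_forall fun t => ?_)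
  · exact eventually_mem_nhdsWithin.mono fun t ht x =>
      add_nonneg (hV.1 x) (mul_nonneg (mem_Ioi.1 ht).le (hφ0 x))
  · rw [measureReal_congr (inter_ae_eq_left_of_ae_eq_univ (eventuallyEq_univ.2 hpos))]
    exact measureReal_mono inter_subset_left (volume_inter_ball_ne_top _ _ _)

lemma IsMinimizer.integral_inner_gradient_nonneg_of_abs_le (hV : IsMinimizer Ω V)
    (hVl : LipschitzWith K V) (hφ : LipschitzWith L φ)
    (hsupp : Function.support φ ⊆ Ω ∩ ball c r) (hle : ∀ x, |φ x| ≤ V x) :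
    0 ≤ ∫ x in Ω ∩ ball c r, inner ℝ (gradient V x) (gradient φ x) := by
  have hsmall : ∀ᶠ t in 𝓝[>] (0 : ℝ), t ∈ Ioo (0 : ℝ) 1 := Ioo_mem_nhdsGT one_pos
  refine hV.integral_inner_gradient_nonneg hVl hφ hsupp ?_ ?_ <;>
    filter_upwards [hsmall] with t ht
  · intro x
    nlinarith [neg_le_of_abs_le (hle x), hV.1 x, ht.1, ht.2]
  · refine measureReal_mono (inter_subset_inter_right _ fun x hx => ?_)
      (measure_inter_ne_top_of_left_ne_top (volume_inter_ball_ne_top Ω c r))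
    refine (hV.1 x).lt_of_ne' fun hVx => ?_
    have hφx : φ x = 0 := abs_nonpos_iff.1 (hVx ▸ hle x)
    simp [hVx, hφx] at hx

lemma IsMinimizer.integral_inner_gradient_eq_zero (hV : IsMinimizer Ω V)
    (hVl : LipschitzWith K V) (hφ : LipschitzWith L φ)
    (hsupp : Function.support φ ⊆ Ω ∩ ball c r) (hle : ∀ x, |φ x| ≤ V x) :
    ∫ x in Ω ∩ ball c r, inner ℝ (gradient V x) (gradient φ x) = 0 := by
  refine le_antisymm ?_ (hV.integral_inner_gradient_nonneg_of_abs_le hVl hφ hsupp hle)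
  have hgrad (x) : gradient (-φ) x = -gradient φ x :=
    gradient_eq_of_fderiv_eq fun v => by simp [fderiv_neg, inner_gradient_left]
  have hneg := hV.integral_inner_gradient_nonneg_of_abs_le hVl hφ.neg
    (Function.support_neg φ ▸ hsupp) (c := c) (r := r) (by simpa only [Pi.neg_apply, abs_neg])
  simpa only [hgrad, inner_neg_right, integral_neg, Left.nonneg_neg_iff] using hneg

end FirstVariation

section Cutoff

lemma abs_le_of_lipschitzWith_of_mem_ball {α : Type*} [PseudoMetricSpace α] {f : α → ℝ} {K : ℝ≥0}
    (hf : LipschitzWith K f) {c x : α} {r : ℝ} (hx : x ∈ ball c r) : |f x| ≤ |f c| + K * r := by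
  have hdist : |f x - f c| ≤ K * r :=
    (hf.dist_le_mul x c).trans (by gcongr; exact (mem_ball.1 hx).le)
  linarith [abs_sub_abs_le_abs_sub (f x) (f c)]

lemma exists_lipschitzWith_mul_of_support_subset_ball {α : Type*} [PseudoMetricSpace α]
    {f ψ : α → ℝ} {K L : ℝ≥0} (hf : LipschitzWith K f) (hψ : LipschitzWith L ψ) {c : α} {r : ℝ}
    (hr : 0 ≤ r) (hsupp : Function.support ψ ⊆ ball c r) :
    ∃ M, LipschitzWith M fun x => f x * ψ x := by
  lift r to ℝ≥0 using hr
  have hψ_le (y : α) : |ψ y| ≤ |ψ c| + L * r := by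
    by_cases hy : ψ y = 0
    · rw [hy, abs_zero]
      positivity
    · exact abs_le_of_lipschitzWith_of_mem_ball hψ (hsupp hy)
  let M : ℝ≥0 := (‖f c‖₊ + K * r) * L + K * (‖ψ c‖₊ + L * r)
  have main {x : α} (y : α) (hx : ψ x ≠ 0) : dist (f x * ψ x) (f y * ψ y) ≤ M * dist x y := by
    have hf_le := abs_le_of_lipschitzWith_of_mem_ball hf (hsupp hx)
    calc dist (f x * ψ x) (f y * ψ y)
        ≤ |f x| * dist (ψ x) (ψ y) + dist (f x) (f y) * |ψ y| := by
          simp only [Real.dist_eq, ← abs_mul]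
          exact (congrArg abs (by ring)).trans_le
            (abs_add_le (f x * (ψ x - ψ y)) ((f x - f y) * ψ y))
      _ ≤ (|f c| + K * r) * (L * dist x y) + K * dist x y * (|ψ c| + L * r) := by
          gcongr
          · exact hψ.dist_le_mul x y
          · exact hf.dist_le_mul x y
          · exact hψ_le y
      _ = M * dist x y := by
          simp only [M, NNReal.coe_add, NNReal.coe_mul, coe_nnnorm, Real.norm_eq_abs]
          ring
  refine ⟨M, LipschitzWith.of_dist_le_mul fun x y => ?_⟩
  by_cases hx : ψ x = 0
  · by_cases hy : ψ y = 0
    · rw [hx, hy, mul_zero, mul_zero, dist_self]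
      positivity
    · rw [dist_comm, dist_comm x]
      exact main x hy
  · exact main y hx

open Real (exp)

variable {E : Type*} [NormedAddCommGroup E]

lemma tendsto_integral_indicator_ball_one_sub_exp_mul_sub [MeasurableSpace E] [BorelSpace E]
    {μ : Measure E} {f g : E → ℝ} (hf : Integrable f μ) (hg : Integrable g μ) :
    Tendsto (fun R : ℝ => ∫ x, (ball 0 R).indicator
      (fun x => (1 - exp ((‖x‖ ^ 2 - R ^ 2) / 2)) * f x - g x) x ∂μ) atTop
      (𝓝 (∫ x, (f x - g x) ∂μ)) := by
  refine tendsto_integral_filter_of_dominated_convergence (fun x => ‖f x‖ + ‖g x‖)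
    (Eventually.of_forall fun R => ?_)
    (Eventually.of_forall fun R => Eventually.of_forall fun x => ?_)
    (hf.norm.add hg.norm) (Eventually.of_forall fun x => ?_)
  · have hcont : Continuous fun x : E => 1 - exp ((‖x‖ ^ 2 - R ^ 2) / 2) := by fun_prop
    exact ((hcont.measurable.aestronglyMeasurable.mul hf.1).sub hg.1).indicator measurableSet_ball
  · by_cases hx : x ∈ ball 0 R
    · have hexp : exp ((‖x‖ ^ 2 - R ^ 2) / 2) ≤ 1 :=
        Real.exp_le_one_iff.2 (by nlinarith [mem_ball_zero_iff.1 hx, norm_nonneg x])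
      have hfactor : ‖1 - exp ((‖x‖ ^ 2 - R ^ 2) / 2)‖ ≤ 1 :=
        abs_le.2 ⟨by linarith, by linarith [Real.exp_pos ((‖x‖ ^ 2 - R ^ 2) / 2)]⟩
      rw [indicator_of_mem hx]
      refine (norm_sub_le _ _).trans (add_le_add_left ?_ _)
      exact (norm_mul_le _ _).trans (mul_le_of_le_one_left (norm_nonneg _) hfactor)
    · rw [indicator_of_notMem hx, norm_zero]
      positivity
  · have hexp : Tendsto (fun R : ℝ => exp ((‖x‖ ^ 2 - R ^ 2) / 2)) atTop (𝓝 0) :=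
      Real.tendsto_exp_atBot.comp ((tendsto_atBot_add_const_left _ _
        (tendsto_neg_atTop_atBot.comp (tendsto_pow_atTop two_ne_zero))).atBot_div_const two_pos)
    have hlim := ((hexp.const_sub 1).mul_const (f x)).sub_const (g x)
    rw [sub_zero, one_mul] at hlim
    refine hlim.congr' ((eventually_gt_atTop ‖x‖).mono fun R hR => ?_)
    simp only [indicator_of_mem (mem_ball_zero_iff.2 hR)]

variable [InnerProductSpace ℝ E]

lemma hasFDerivAt_exp_neg_norm_sq_div_two (x : E) :
    HasFDerivAt (fun x : E => exp (-‖x‖ ^ 2 / 2)) (-exp (-‖x‖ ^ 2 / 2) • innerSL ℝ x) x := by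
  have hsq : HasFDerivAt (fun x : E => -‖x‖ ^ 2 / 2) (-innerSL ℝ x) x := by
    refine (((hasStrictFDerivAt_norm_sq x).hasFDerivAt.const_mul (-1 / 2)).congr_of_eventuallyEq
      (Eventually.of_forall fun y => by ring)).congr_fderiv ?_
    ext v
    simp
    ring
  simpa using hsq.exp

lemma lipschitzWith_exp_neg_norm_sq_div_two :
    LipschitzWith 1 fun x : E => exp (-‖x‖ ^ 2 / 2) := by
  refine lipschitzWith_of_nnnorm_fderiv_le (𝕜 := ℝ)
    (fun x => (hasFDerivAt_exp_neg_norm_sq_div_two x).differentiableAt) fun x => ?_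
  have hle : ‖x‖ ≤ exp (‖x‖ ^ 2 / 2) := by
    nlinarith [Real.add_one_le_exp (‖x‖ ^ 2 / 2), sq_nonneg (‖x‖ - 1)]
  rw [(hasFDerivAt_exp_neg_norm_sq_div_two x).fderiv, ← NNReal.coe_le_coe, coe_nnnorm, norm_smul,
    norm_neg, innerSL_apply_norm, Real.norm_of_nonneg (Real.exp_pos _).le, neg_div, Real.exp_neg]
  exact inv_mul_le_one_of_le₀ hle (Real.exp_pos _).le

/-- The Gaussian `exp (-‖x‖² / 2)` lowered by its value on the sphere of radius `R` and cut off at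
zero: a Lipschitz test function supported in the ball of radius `R`. -/
noncomputable def truncatedGaussian (R : ℝ) (x : E) : ℝ :=
  max (exp (-‖x‖ ^ 2 / 2) - exp (-R ^ 2 / 2)) 0

omit [InnerProductSpace ℝ E] in
lemma truncatedGaussian_nonneg (R : ℝ) (x : E) : 0 ≤ truncatedGaussian R x := le_max_right _ _

omit [InnerProductSpace ℝ E] in
lemma truncatedGaussian_le_one (R : ℝ) (x : E) : truncatedGaussian R x ≤ 1 := by
  refine max_le ?_ zero_le_one
  have hexp : exp (-‖x‖ ^ 2 / 2) ≤ 1 := Real.exp_le_one_iff.2 (by linarith [sq_nonneg ‖x‖])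
  linarith [Real.exp_pos (-R ^ 2 / 2)]

lemma lipschitzWith_truncatedGaussian (R : ℝ) :
    LipschitzWith (1 + 0) (truncatedGaussian (E := E) R) :=
  (lipschitzWith_exp_neg_norm_sq_div_two.sub (LipschitzWith.const _)).max_const 0

omit [InnerProductSpace ℝ E] in
lemma support_truncatedGaussian_subset {R : ℝ} (hR : 0 ≤ R) :
    Function.support (truncatedGaussian (E := E) R) ⊆ ball 0 R := by
  intro x hx
  by_contra hxR
  rw [mem_ball_zero_iff, not_lt] at hxR
  refine hx (max_eq_right (sub_nonpos.2 (Real.exp_le_exp.2 ?_)))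
  nlinarith

omit [InnerProductSpace ℝ E] in
lemma truncatedGaussian_of_mem_ball {R : ℝ} {x : E} (hx : x ∈ ball (0 : E) R) :
    truncatedGaussian R x = exp (-‖x‖ ^ 2 / 2) - exp (-R ^ 2 / 2) := by
  refine max_eq_left (sub_nonneg.2 (Real.exp_le_exp.2 ?_))
  nlinarith [mem_ball_zero_iff.1 hx, norm_nonneg x]

lemma hasFDerivAt_truncatedGaussian {R : ℝ} {x : E} (hx : x ∈ ball (0 : E) R) :
    HasFDerivAt (truncatedGaussian R) (-exp (-‖x‖ ^ 2 / 2) • innerSL ℝ x) x :=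
  ((hasFDerivAt_exp_neg_norm_sq_div_two x).sub_const _).congr_of_eventuallyEq
    (eventually_of_mem (isOpen_ball.mem_nhds hx) fun _ => truncatedGaussian_of_mem_ball)

lemma gradient_truncatedGaussian [CompleteSpace E] {R : ℝ} {x : E} (hx : x ∈ ball (0 : E) R) :
    gradient (truncatedGaussian R) x = -exp (-‖x‖ ^ 2 / 2) • x :=
  gradient_eq_of_fderiv_eq fun v => by
    simp [(hasFDerivAt_truncatedGaussian hx).fderiv, inner_smul_left]

lemma IsPosHomogeneous.inner_gradient_mul_truncatedGaussian [CompleteSpace E] {u w : E → ℝ}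
    (hu : IsPosHomogeneous u) {R : ℝ} {x : E} (hx : x ∈ ball (0 : E) R)
    (hdu : DifferentiableAt ℝ u x) (hdw : DifferentiableAt ℝ w x) :
    inner ℝ (gradient u x) (gradient (fun y => w y * truncatedGaussian R y) x) =
      truncatedGaussian R x * inner ℝ (gradient u x) (gradient w x) -
        exp (-‖x‖ ^ 2 / 2) * (u x * w x) := by
  rw [gradient_fun_mul hdw (hasFDerivAt_truncatedGaussian hx).differentiableAt,
    gradient_truncatedGaussian hx, inner_add_right, inner_smul_right,
    inner_smul_right, inner_smul_right, hu.inner_gradient_self hdu]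
  ring

end Cutoff

section GaussianEulerLagrange

open ProbabilityTheory
open Real (exp)
open scoped Real

variable {n : ℕ} {V w : EuclideanSpace ℝ (Fin n) → ℝ} {K L : ℝ≥0}

lemma IsMinimizer.volume_setOf_eq_zero_pos (hV : IsMinimizer univ V) (hom : IsPosHomogeneous V) :
    0 < volume {x | V x = 0} := by
  obtain ⟨K, hVl⟩ := hom.exists_lipschitzWith hV.2.1
  refine pos_iff_ne_zero.2 fun hnull => ?_
  have hpos : ∀ᵐ x, 0 < V x :=
    (measure_eq_zero_iff_ae_notMem.1 hnull).mono fun x hx => (hV.1 x).lt_of_ne' hx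
  have hvar := hV.integral_inner_gradient_nonneg_of_ae_pos hVl hpos
    (lipschitzWith_truncatedGaussian 1)
    ((support_truncatedGaussian_subset zero_le_one).trans_eq (univ_inter _).symm)
    (truncatedGaussian_nonneg 1)
  have heuler : ∀ᵐ x, x ∈ ball 0 1 →
      inner ℝ (gradient V x) (gradient (truncatedGaussian 1) x) = -(exp (-‖x‖ ^ 2 / 2) * V x) := by
    filter_upwards [hVl.ae_differentiableAt] with x hx hx1
    rw [gradient_truncatedGaussian hx1, inner_smul_right, hom.inner_gradient_self hx, neg_mul]
  rw [univ_inter, setIntegral_congr_ae measurableSet_ball heuler, integral_neg] at hvar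
  have hcont : Continuous fun x => exp (-‖x‖ ^ 2 / 2) * V x :=
    lipschitzWith_exp_neg_norm_sq_div_two.continuous.mul hVl.continuous
  have hzero := (integral_eq_zero_iff_of_nonneg
    (fun x => mul_nonneg (Real.exp_pos _).le (hV.1 x))
    ((hcont.continuousOn.integrableOn_compact (isCompact_closedBall 0 1)).mono_set
      ball_subset_closedBall)).1 (le_antisymm (neg_nonneg.1 hvar)
        (integral_nonneg fun x => mul_nonneg (Real.exp_pos _).le (hV.1 x)))
  have : (ae (volume.restrict (ball (0 : EuclideanSpace ℝ (Fin n)) 1))).NeBot :=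
    ae_restrict_neBot.2 (measure_ball_pos volume 0 one_pos).ne'
  obtain ⟨x, hx0, hx⟩ := (hzero.and (ae_restrict_of_ae hpos)).exists
  exact (mul_pos (Real.exp_pos _) hx).ne' hx0

lemma IsMinimizer.setIntegral_gaussian_eq_zero (hV : IsMinimizer univ V) (hVl : LipschitzWith K V)
    (hom : IsPosHomogeneous V) (hw : LipschitzWith L w) (hw0 : ∀ x, 0 ≤ w x)
    (hwV : ∀ x, w x ≤ V x) {R : ℝ} (hR : 0 ≤ R) :
    ∫ x in ball 0 R, (truncatedGaussian R x * inner ℝ (gradient V x) (gradient w x) -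
      exp (-‖x‖ ^ 2 / 2) * (V x * w x)) = 0 := by
  have hsupp := support_truncatedGaussian_subset (E := EuclideanSpace ℝ (Fin n)) hR
  obtain ⟨M, hM⟩ := exists_lipschitzWith_mul_of_support_subset_ball hw
    (lipschitzWith_truncatedGaussian R) hR hsupp
  have hle (x) : |w x * truncatedGaussian R x| ≤ V x := by
    rw [abs_of_nonneg (mul_nonneg (hw0 x) (truncatedGaussian_nonneg R x))]
    exact (mul_le_of_le_one_right (hw0 x) (truncatedGaussian_le_one R x)).trans (hwV x)
  have hEL := hV.integral_inner_gradient_eq_zero hVl hM (c := 0) (r := R)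
    (((Function.support_mul_subset_right _ _).trans hsupp).trans_eq (univ_inter _).symm) hle
  rw [univ_inter] at hEL
  rw [← hEL]
  refine setIntegral_congr_ae measurableSet_ball ?_
  filter_upwards [hVl.ae_differentiableAt, hw.ae_differentiableAt] with x hVx hwx hx
  exact (hom.inner_gradient_mul_truncatedGaussian hx hVx hwx).symm

lemma IsMinimizer.integral_indicator_ball_stdGaussian_eq_zero (hV : IsMinimizer univ V)
    (hVl : LipschitzWith K V) (hom : IsPosHomogeneous V) (hw : LipschitzWith L w)
    (hw0 : ∀ x, 0 ≤ w x) (hwV : ∀ x, w x ≤ V x) {R : ℝ} (hR : 0 ≤ R) :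
    ∫ x, (ball 0 R).indicator (fun x => (1 - exp ((‖x‖ ^ 2 - R ^ 2) / 2)) *
      inner ℝ (gradient V x) (gradient w x) - V x * w x) x
        ∂stdGaussian (EuclideanSpace ℝ (Fin n)) = 0 := by
  rw [integral_stdGaussian]
  simp_rw [← indicator_mul_right]
  rw [integral_indicator measurableSet_ball]
  have hpdf (x : EuclideanSpace ℝ (Fin n)) (hx : x ∈ ball 0 R) : stdGaussianPDFReal x *
      ((1 - exp ((‖x‖ ^ 2 - R ^ 2) / 2)) * inner ℝ (gradient V x) (gradient w x) - V x * w x) =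
      ((2 * π) ^ (Module.finrank ℝ (EuclideanSpace ℝ (Fin n)) / 2 : ℝ))⁻¹ *
        (truncatedGaussian R x * inner ℝ (gradient V x) (gradient w x) -
          exp (-‖x‖ ^ 2 / 2) * (V x * w x)) := by
    have hsplit : exp (-R ^ 2 / 2) = exp (-‖x‖ ^ 2 / 2) * exp ((‖x‖ ^ 2 - R ^ 2) / 2) := by
      rw [← Real.exp_add]
      ring_nf
    rw [stdGaussianPDFReal, truncatedGaussian_of_mem_ball hx, hsplit]
    ring
  rw [setIntegral_congr_fun measurableSet_ball hpdf, integral_const_mul,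
    hV.setIntegral_gaussian_eq_zero hVl hom hw hw0 hwV hR, mul_zero]

lemma IsMinimizer.integral_inner_gradient_stdGaussian_eq (hV : IsMinimizer univ V)
    (hVl : LipschitzWith K V) (hom : IsPosHomogeneous V) (hw : LipschitzWith L w)
    (hw0 : ∀ x, 0 ≤ w x) (hwV : ∀ x, w x ≤ V x) :
    ∫ x, inner ℝ (gradient V x) (gradient w x) ∂stdGaussian (EuclideanSpace ℝ (Fin n)) =
      ∫ x, V x * w x ∂stdGaussian (EuclideanSpace ℝ (Fin n)) := by
  set γ := stdGaussian (EuclideanSpace ℝ (Fin n))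
  have hgrad : Integrable (fun x => inner ℝ (gradient V x) (gradient w x)) γ :=
    integrable_inner_of_memLp (memLp_gradient_of_lipschitzWith hVl γ 2)
      (memLp_gradient_of_lipschitzWith hw γ 2)
  have hmul : Integrable (fun x => V x * w x) γ :=
    (memLp_two_stdGaussian_of_lipschitzWith hVl).integrable_mul
      (memLp_two_stdGaussian_of_lipschitzWith hw)
  have hlim := (tendsto_integral_indicator_ball_one_sub_exp_mul_sub hgrad hmul).congr'
    (f₂ := fun _ => 0) ((eventually_ge_atTop 0).mono fun R hR =>
      hV.integral_indicator_ball_stdGaussian_eq_zero hVl hom hw hw0 hwV hR)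
  rw [← sub_eq_zero, ← integral_sub hgrad hmul]
  exact tendsto_nhds_unique hlim tendsto_const_nhds

end GaussianEulerLagrange

section Proportionality

open ProbabilityTheory

lemma integral_stdGaussian_pos {E : Type*} [NormedAddCommGroup E] [InnerProductSpace ℝ E]
    [FiniteDimensional ℝ E] [MeasurableSpace E] [BorelSpace E] {f : E → ℝ} {K : ℝ≥0}
    (hf : LipschitzWith K f) (hf0 : ∀ x, 0 ≤ f x) (hne : f ≠ 0) :
    0 < ∫ x, f x ∂stdGaussian E := by
  rw [integral_pos_iff_support_of_nonneg hf0
    ((memLp_two_stdGaussian_of_lipschitzWith hf).integrable one_le_two), pos_iff_ne_zero]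
  intro hnull
  have hempty := (hf.continuous.isOpen_support.measure_eq_zero_iff (μ := volume)).1
    (absolutelyContinuous_stdGaussian hnull)
  exact hne (Function.support_eq_empty_iff.1 hempty)

variable {n : ℕ} {u V : EuclideanSpace ℝ (Fin n) → ℝ} {K L : ℝ≥0}

lemma integral_norm_gradient_add_mul_sq_stdGaussian_eq (hu : IsMinimizer univ u)
    (hV : IsMinimizer univ V) (huh : IsPosHomogeneous u) (hVh : IsPosHomogeneous V)
    (hul : LipschitzWith K u) (hVl : LipschitzWith L V) (hle : ∀ x, u x ≤ V x) (t : ℝ) :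
    ∫ x, ‖gradient (fun x => u x + t * V x) x‖ ^ 2 ∂stdGaussian (EuclideanSpace ℝ (Fin n)) =
      ∫ x, (u x + t * V x) ^ 2 ∂stdGaussian (EuclideanSpace ℝ (Fin n)) := by
  have huu := hu.integral_inner_gradient_stdGaussian_eq hul huh hul hu.1 fun _ => le_rfl
  have hVV := hV.integral_inner_gradient_stdGaussian_eq hVl hVh hVl hV.1 fun _ => le_rfl
  have hVu := hV.integral_inner_gradient_stdGaussian_eq hVl hVh hul hu.1 hle
  have hsq := integral_norm_add_smul_sq (memLp_two_stdGaussian_of_lipschitzWith hul)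
    (memLp_two_stdGaussian_of_lipschitzWith hVl) t
  simp only [Real.norm_eq_abs, sq_abs, smul_eq_mul, RCLike.inner_apply, conj_trivial] at hsq
  simp only [real_inner_self_eq_norm_sq, ← sq] at huu hVV
  simp_rw [real_inner_comm (gradient u _)] at hVu
  rw [integral_norm_gradient_add_mul_sq stdGaussian_absolutelyContinuous hul hVl, hsq, huu, hVV,
    hVu]

lemma IsMinimizer.eq_zero_of_setOf_eq_zero_subset_ker (hV : IsMinimizer univ V)
    (hVh : IsPosHomogeneous V) {a : EuclideanSpace ℝ (Fin n)}
    (ha : ∀ x, V x = 0 → inner ℝ a x = (0 : ℝ)) : a = 0 := by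
  by_contra hne
  have htop : (innerSL ℝ a).ker ≠ ⊤ := fun htop =>
    hne (inner_self_eq_zero.1 (show a ∈ (innerSL ℝ a).ker from htop ▸ trivial))
  exact (hV.volume_setOf_eq_zero_pos hVh).ne'
    (measure_mono_null (fun x hx => ha x hx) (Measure.addHaar_submodule volume _ htop))

lemma IsMinimizer.exists_eq_const_mul (hu : IsMinimizer univ u) (hV : IsMinimizer univ V)
    (huh : IsPosHomogeneous u) (hVh : IsPosHomogeneous V) (hne : u ≠ 0)
    (hle : ∀ x, u x ≤ V x) : ∃ c > 0, ∀ x, u x = c * V x := by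
  obtain ⟨K, hul⟩ := huh.exists_lipschitzWith hu.2.1
  obtain ⟨L, hVl⟩ := hVh.exists_lipschitzWith hV.2.1
  have hVne : V ≠ 0 := fun h =>
    hne (funext fun x => ((hle x).trans_eq congr($h x)).antisymm (hu.1 x))
  have hu_pos := integral_stdGaussian_pos hul hu.1 hne
  have hV_pos := integral_stdGaussian_pos hVl hV.1 hVne
  set c := (∫ x, u x ∂stdGaussian _) / ∫ x, V x ∂stdGaussian _ with hc
  have hmean : ∫ x, (u x + -c * V x) ∂stdGaussian _ = 0 := by
    rw [integral_add ((memLp_two_stdGaussian_of_lipschitzWith hul).integrable one_le_two)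
      (((memLp_two_stdGaussian_of_lipschitzWith hVl).integrable one_le_two).const_mul _),
      integral_const_mul, hc, neg_mul, div_mul_cancel₀ _ hV_pos.ne', add_neg_cancel]
  obtain ⟨a, ha⟩ := exists_eq_add_inner_of_integral_norm_gradient_sq_le
    (hul.add ((lipschitzWith_smul (-c)).comp hVl)) hmean
    (integral_norm_gradient_add_mul_sq_stdGaussian_eq hu hV huh hVh hul hVl hle (-c)).le
  simp only [Function.comp_apply, smul_eq_mul, huh.map_zero, hVh.map_zero, mul_zero,
    add_zero, zero_add] at ha
  have ha0 : a = 0 := hV.eq_zero_of_setOf_eq_zero_subset_ker hVh fun x hx => by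
    have hux : u x = 0 := ((hle x).trans_eq hx).antisymm (hu.1 x)
    rw [← ha, hux, hx, mul_zero, add_zero]
  refine ⟨c, div_pos hu_pos hV_pos, fun x => ?_⟩
  linarith [(ha x).trans (by rw [ha0, inner_zero_left])]

end Proportionality

section InnerVariation

variable {E : Type*} [NormedAddCommGroup E]

section Shear

variable [NormedSpace ℝ E] {η : E → ℝ} {L : ℝ≥0}

/-- The deformation `x ↦ x + η(x) e` along which the domain is varied. -/
def shear (η : E → ℝ) (e x : E) : E := x + η x • e

lemma abs_fderiv_apply_le_of_lipschitzWith {f : E → ℝ} {K : ℝ≥0} (hf : LipschitzWith K f)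
    (x e : E) : |fderiv ℝ f x e| ≤ K * ‖e‖ :=
  (fderiv ℝ f x).le_of_opNorm_le (norm_fderiv_le_of_lipschitz ℝ hf) e

lemma lipschitzWith_smul_right (hη : LipschitzWith L η) (e : E) :
    LipschitzWith (‖e‖₊ * L) fun x => η x • e :=
  ((ContinuousLinearMap.toSpanSingleton ℝ e).lipschitz.comp hη).weaken
    (by rw [ContinuousLinearMap.nnnorm_toSpanSingleton])

lemma exists_homeomorph_coe_eq_shear [CompleteSpace E] (hη : LipschitzWith L η) {e : E}
    (he : ‖e‖₊ * L < 1) :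
    ∃ T : E ≃ₜ E, ⇑T = shear η e ∧ LipschitzWith (1 - ‖e‖₊ * L)⁻¹ T.symm := by
  have happrox : ApproximatesLinearOn (shear η e)
      (ContinuousLinearEquiv.refl ℝ E : E →L[ℝ] E) univ (‖e‖₊ * L) := fun x _ y _ => by
    have hxy := (lipschitzWith_smul_right hη e).norm_sub_le x y
    simp only [shear, ContinuousLinearEquiv.coe_refl, ContinuousLinearMap.id_apply]
    rwa [add_sub_add_comm, add_sub_cancel_left]
  have hsymm : Subsingleton E ∨
      ‖e‖₊ * L < ‖((ContinuousLinearEquiv.refl ℝ E).symm : E →L[ℝ] E)‖₊⁻¹ := by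
    rcases subsingleton_or_nontrivial E with hE | hE
    · exact .inl hE
    · right
      rwa [ContinuousLinearEquiv.refl_symm, ContinuousLinearEquiv.coe_refl,
        ContinuousLinearMap.nnnorm_id, inv_one]
  have hanti : AntilipschitzWith (1 - ‖e‖₊ * L)⁻¹ (shear η e) := by
    have h := AntilipschitzWith.id.add_lipschitzWith (lipschitzWith_smul_right hη e) (by simpa)
    rwa [inv_one] at h
  let T := happrox.toHomeomorph _ hsymm
  exact ⟨T, rfl, hanti.to_rightInverse T.apply_symm_apply⟩

lemma hasFDerivAt_shear {x : E} (hη : DifferentiableAt ℝ η x) (e : E) :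
    HasFDerivAt (shear η e) (ContinuousLinearMap.id ℝ E + (fderiv ℝ η x).smulRight e) x :=
  (hasFDerivAt_id x).add (hη.hasFDerivAt.smul_const e)

lemma det_id_add_smulRight [FiniteDimensional ℝ E] (φ : E →L[ℝ] ℝ) (e : E) :
    (ContinuousLinearMap.id ℝ E + φ.smulRight e).det = 1 + φ e :=
  LinearMap.transvection.det (φ : E →ₗ[ℝ] ℝ) e

lemma image_eq_of_eqOn_compl_id {α : Type*} {f : α → α} (hf : f.Bijective) {D : Set α}
    (h : EqOn f id Dᶜ) : f '' D = D := by
  rw [← compl_inj_iff, ← image_compl_eq hf, h.image_eq, image_id]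

lemma eqOn_shear_id_of_support_subset {D : Set E} (hD : Function.support η ⊆ D) (e : E) :
    EqOn (shear η e) id Dᶜ := fun x hx => by
  rw [shear, Function.notMem_support.1 fun h => hx (hD h), zero_smul, add_zero, id]

lemma integrable_mul_fderiv_apply [MeasurableSpace E] [BorelSpace E] {μ : Measure E} {f g : E → ℝ}
    {K : ℝ≥0} (hg : Integrable g μ) (hf : LipschitzWith K f) (e : E) :
    Integrable (fun x => g x * fderiv ℝ f x e) μ :=
  hg.mul_bdd (measurable_fderiv_apply_const ℝ f e).aestronglyMeasurable
    (Eventually.of_forall fun x => abs_fderiv_apply_le_of_lipschitzWith hf x e)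

lemma integrable_fderiv_apply [MeasurableSpace E] [BorelSpace E] {μ : Measure E}
    [IsFiniteMeasure μ] (hη : LipschitzWith L η) (e : E) :
    Integrable (fun x => fderiv ℝ η x e) μ := by
  simpa using integrable_mul_fderiv_apply (integrable_const 1) hη e

variable [FiniteDimensional ℝ E] {T : E ≃ₜ E} {e : E}

lemma differentiableAt_symm_of_coe_eq_shear (hT : ⇑T = shear η e) {x : E}
    (hη : DifferentiableAt ℝ η x) (hJ : 1 + fderiv ℝ η x e ≠ 0) :
    DifferentiableAt ℝ T.symm (T x) := by
  have hdet : (ContinuousLinearMap.id ℝ E + (fderiv ℝ η x).smulRight e).det ≠ 0 := by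
    rwa [det_id_add_smulRight]
  refine (HasFDerivAt.of_local_left_inverse (f := T)
    (f' := ContinuousLinearMap.toContinuousLinearEquivOfDetNeZero _ hdet)
    T.symm.continuous.continuousAt ?_ (Eventually.of_forall T.apply_symm_apply)).differentiableAt
  rw [T.symm_apply_apply, hT, ContinuousLinearMap.coe_toContinuousLinearEquivOfDetNeZero]
  exact hasFDerivAt_shear hη e

end Shear

variable [InnerProductSpace ℝ E] [FiniteDimensional ℝ E] {u η : E → ℝ} {T : E ≃ₜ E} {e : E}

-- Differentiating `u = (u ∘ T.symm) ∘ T` in direction `e` determines `∂ₑ(u ∘ T.symm)`, and then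
-- the whole gradient.
lemma gradient_comp_symm_of_coe_eq_shear (hT : ⇑T = shear η e) {x : E}
    (hη : DifferentiableAt ℝ η x) (hu : DifferentiableAt ℝ u x) (hJ : 1 + fderiv ℝ η x e ≠ 0) :
    gradient (fun y => u (T.symm y)) (T x) =
      gradient u x - (fderiv ℝ u x e / (1 + fderiv ℝ η x e)) • gradient η x := by
  set v : E → ℝ := fun y => u (T.symm y)
  have hv : DifferentiableAt ℝ v (T x) :=
    DifferentiableAt.comp (T x) (by rwa [T.symm_apply_apply])
      (differentiableAt_symm_of_coe_eq_shear hT hη hJ)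
  have hvT : v ∘ T = u := funext fun y => congrArg u (T.symm_apply_apply y)
  have hTx : HasFDerivAt T _ x := hT ▸ hasFDerivAt_shear hη e
  have hchain (w : E) :
      fderiv ℝ u x w = fderiv ℝ v (T x) w + fderiv ℝ η x w * fderiv ℝ v (T x) e := by
    rw [← hvT, (hv.hasFDerivAt.comp x hTx).fderiv]
    simp
  have he : fderiv ℝ u x e / (1 + fderiv ℝ η x e) = fderiv ℝ v (T x) e := by
    rw [div_eq_iff hJ, hchain]
    ring
  refine gradient_eq_of_fderiv_eq fun w => ?_
  rw [he, inner_sub_left, inner_smul_left, inner_gradient_left, inner_gradient_left, hchain w,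
    conj_trivial]
  ring

/-- The integrand of the first inner variation of the Dirichlet energy, i.e. the derivative at
`t = 0` of `∫ ‖∇(u ∘ Tₜ⁻¹)‖²` with `Tₜ x = x + t η(x) e`. -/
noncomputable def innerVariationDensity (u η : E → ℝ) (e x : E) : ℝ :=
  ‖gradient u x‖ ^ 2 * fderiv ℝ η x e - 2 * (inner ℝ (gradient u x) (gradient η x) * fderiv ℝ u x e)

lemma innerVariationDensity_smul (u η : E → ℝ) (t : ℝ) (e x : E) :
    innerVariationDensity u η (t • e) x = t * innerVariationDensity u η e x := by
  simp only [innerVariationDensity, map_smul, smul_eq_mul]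
  ring

lemma innerVariationDensity_const_mul (c : ℝ) (u η : E → ℝ) (e x : E) :
    innerVariationDensity (fun y => c * u y) η e x = c ^ 2 * innerVariationDensity u η e x := by
  simp only [innerVariationDensity, ← inner_gradient_left, gradient_const_mul, norm_smul, mul_pow,
    Real.norm_eq_abs, sq_abs, inner_smul_left, conj_trivial]
  ring

lemma mul_norm_gradient_comp_symm_sq_le (hT : ⇑T = shear η e) {x : E}
    (hη : DifferentiableAt ℝ η x) (hu : DifferentiableAt ℝ u x)
    (hJ : 1 / 2 ≤ 1 + fderiv ℝ η x e) :
    (1 + fderiv ℝ η x e) * ‖gradient (fun y => u (T.symm y)) (T x)‖ ^ 2 ≤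
      ‖gradient u x‖ ^ 2 + innerVariationDensity u η e x +
        2 * (‖gradient η x‖ ^ 2 * fderiv ℝ u x e * fderiv ℝ u x e) := by
  have hJpos : 0 < 1 + fderiv ℝ η x e := by linarith
  have hinv : (1 + fderiv ℝ η x e)⁻¹ ≤ 2 := by
    rw [inv_le_comm₀ hJpos two_pos]
    linarith
  rw [gradient_comp_symm_of_coe_eq_shear hT hη hu hJpos.ne', norm_sub_sq_real, inner_smul_right,
    norm_smul, mul_pow, Real.norm_eq_abs, sq_abs]
  calc _ = ‖gradient u x‖ ^ 2 + innerVariationDensity u η e x +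
        (1 + fderiv ℝ η x e)⁻¹ * (‖gradient η x‖ ^ 2 * fderiv ℝ u x e * fderiv ℝ u x e) := by
        rw [innerVariationDensity]
        field_simp
        ring
    _ ≤ _ := by
        gcongr
        rw [mul_assoc]
        exact mul_nonneg (sq_nonneg _) (mul_self_nonneg _)

variable [MeasurableSpace E] [BorelSpace E] {K L : ℝ≥0} {μ : Measure E}

lemma integrable_norm_gradient_sq [IsFiniteMeasure μ] (hu : LipschitzWith K u) :
    Integrable (fun x => ‖gradient u x‖ ^ 2) μ :=
  (memLp_two_iff_integrable_sq_norm (measurable_gradient u).aestronglyMeasurable).1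
    (memLp_gradient_of_lipschitzWith hu μ 2)

lemma integrable_innerVariationDensity [IsFiniteMeasure μ] (hu : LipschitzWith K u)
    (hη : LipschitzWith L η) (e : E) : Integrable (innerVariationDensity u η e) μ :=
  (integrable_mul_fderiv_apply (integrable_norm_gradient_sq hu) hη e).sub
    ((integrable_mul_fderiv_apply (integrable_inner_of_memLp
      (memLp_gradient_of_lipschitzWith hu μ 2) (memLp_gradient_of_lipschitzWith hη μ 2)) hu
      e).const_mul 2)

lemma setIntegral_image_shear (hT : ⇑T = shear η e) (hη : Differentiable ℝ η)
    (hJ : ∀ x, 0 ≤ 1 + fderiv ℝ η x e) {D : Set E} (hD : MeasurableSet D) (g : E → ℝ) :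
    ∫ y in T '' D, g y = ∫ x in D, (1 + fderiv ℝ η x e) * g (T x) := by
  rw [integral_image_eq_integral_abs_det_fderiv_smul volume hD
    (fun x _ => (hT ▸ hasFDerivAt_shear (hη x) e : HasFDerivAt T _ x).hasFDerivWithinAt)
    T.injective.injOn]
  simp only [det_id_add_smulRight, abs_of_nonneg (hJ _), smul_eq_mul]

lemma measureReal_image_shear (hT : ⇑T = shear η e) (hη : Differentiable ℝ η)
    (hηl : LipschitzWith L η) (hJ : ∀ x, 0 ≤ 1 + fderiv ℝ η x e) {D : Set E}
    (hD : MeasurableSet D) (hfin : volume D ≠ ∞) :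
    volume.real (T '' D) = volume.real D + ∫ x in D, fderiv ℝ η x e := by
  have := isFiniteMeasure_restrict.2 hfin
  have hvol := setIntegral_image_shear hT hη hJ hD fun _ => 1
  simp only [mul_one] at hvol
  rw [integral_add (integrable_const 1) (integrable_fderiv_apply hηl e)] at hvol
  simpa using hvol

lemma setIntegral_norm_gradient_comp_symm_sq_le (hT : ⇑T = shear η e)
    (hη : Differentiable ℝ η) (hηl : LipschitzWith L η) (hu : LipschitzWith K u)
    (hJ : ∀ x, 1 / 2 ≤ 1 + fderiv ℝ η x e) {D : Set E}
    (hD : MeasurableSet D) (hfin : volume D ≠ ∞) (hTD : T '' D = D) :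
    ∫ y in D, ‖gradient (fun y => u (T.symm y)) y‖ ^ 2 ≤
      (∫ x in D, ‖gradient u x‖ ^ 2) + (∫ x in D, innerVariationDensity u η e x) +
        2 * ∫ x in D, ‖gradient η x‖ ^ 2 * fderiv ℝ u x e * fderiv ℝ u x e := by
  have := isFiniteMeasure_restrict.2 hfin
  have hu_int : IntegrableOn (fun x => ‖gradient u x‖ ^ 2) D := integrable_norm_gradient_sq hu
  have hvar_int : IntegrableOn (innerVariationDensity u η e) D :=
    integrable_innerVariationDensity hu hηl e
  have hrem_int : IntegrableOn
      (fun x => ‖gradient η x‖ ^ 2 * fderiv ℝ u x e * fderiv ℝ u x e) D :=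
    integrable_mul_fderiv_apply
      (integrable_mul_fderiv_apply (integrable_norm_gradient_sq hηl) hu e) hu e
  have hsum_int : IntegrableOn (fun x => ‖gradient u x‖ ^ 2 + innerVariationDensity u η e x) D :=
    hu_int.add hvar_int
  rw [← integral_const_mul, ← integral_add hu_int hvar_int,
    ← integral_add hsum_int (hrem_int.const_mul 2)]
  conv_lhs => rw [← hTD]
  rw [setIntegral_image_shear hT hη (fun x => by linarith [hJ x]) hD]
  refine integral_mono_of_nonneg (Eventually.of_forall fun x => ?_)
    (hsum_int.add (hrem_int.const_mul 2)) (ae_restrict_of_ae (hu.ae_differentiableAt.mono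
      fun x hx => mul_norm_gradient_comp_symm_sq_le hT (hη x) hx (hJ x)))
  exact mul_nonneg (by linarith [hJ x]) (sq_nonneg _)

end InnerVariation

section Stationarity

variable {n : ℕ} {Ω : Set (EuclideanSpace ℝ (Fin n))} {u η : EuclideanSpace ℝ (Fin n) → ℝ}
  {c : EuclideanSpace ℝ (Fin n)} {r : ℝ} {K L : ℝ≥0}

lemma IsMinimizer.integral_innerVariationDensity_add_nonneg (hu : IsMinimizer Ω u)
    (hul : LipschitzWith K u) (hΩ : MeasurableSet Ω) (hη : Differentiable ℝ η)
    (hηl : LipschitzWith L η) (hsupp : Function.support η ⊆ Ω ∩ ball c r)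
    {e : EuclideanSpace ℝ (Fin n)} (he : ‖e‖₊ * L ≤ 1 / 2) :
    0 ≤ (∫ x in Ω ∩ ball c r, innerVariationDensity u η e x) +
      (2 * ∫ x in Ω ∩ ball c r, ‖gradient η x‖ ^ 2 * fderiv ℝ u x e * fderiv ℝ u x e) +
        ∫ x in Ω ∩ ball c r ∩ {x | 0 < u x}, fderiv ℝ η x e := by
  have hD : MeasurableSet (Ω ∩ ball c r) := hΩ.inter measurableSet_ball
  have hDfin := volume_inter_ball_ne_top Ω c r
  have hpos : MeasurableSet {x | 0 < u x} :=
    (isOpen_lt continuous_const hul.continuous).measurableSet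
  obtain ⟨T, hT, hTl⟩ := exists_homeomorph_coe_eq_shear hηl
    (he.trans_lt (NNReal.half_lt_self one_ne_zero))
  have hJ (x) : 1 / 2 ≤ 1 + fderiv ℝ η x e := by
    have hηe := neg_le_of_abs_le (abs_fderiv_apply_le_of_lipschitzWith hηl x e)
    have hsmall : ‖e‖ * L ≤ 1 / 2 := mod_cast he
    linarith [hsmall]
  have hfix : EqOn T id (Ω ∩ ball c r)ᶜ := hT ▸ eqOn_shear_id_of_support_subset hsupp e
  have hTD : T '' (Ω ∩ ball c r) = Ω ∩ ball c r := image_eq_of_eqOn_compl_id T.bijective hfix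
  have hTpos : T '' (Ω ∩ ball c r ∩ {x | 0 < u x}) =
      Ω ∩ ball c r ∩ {y | 0 < u (T.symm y)} := by
    rw [image_inter T.injective, hTD, T.image_eq_preimage_symm {x | 0 < u x}]
    rfl
  have hne : {y | u (T.symm y) ≠ u y} ⊆ Ω ∩ ball c r := fun y hy => by
    by_contra hyD
    exact hy (congrArg u (T.symm_apply_eq.2 (hfix hyD).symm))
  have hmin := hu.integral_add_measureReal_le hul (hul.comp hTl) (fun y => hu.1 (T.symm y)) hne
  have henergy := setIntegral_norm_gradient_comp_symm_sq_le hT hη hηl hul hJ hD hDfin hTD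
  have hvol := measureReal_image_shear hT hη hηl (fun x => by linarith [hJ x]) (hD.inter hpos)
    (measure_inter_ne_top_of_left_ne_top hDfin)
  rw [hTpos] at hvol
  simp only [Function.comp_def] at hmin
  linarith

lemma IsMinimizer.integral_innerVariationDensity_add_integral_fderiv_nonneg
    (hu : IsMinimizer Ω u) (hul : LipschitzWith K u) (hΩ : MeasurableSet Ω)
    (hη : Differentiable ℝ η) (hηl : LipschitzWith L η)
    (hsupp : Function.support η ⊆ Ω ∩ ball c r) (e : EuclideanSpace ℝ (Fin n)) :
    0 ≤ (∫ x in Ω ∩ ball c r, innerVariationDensity u η e x) +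
      ∫ x in Ω ∩ ball c r ∩ {x | 0 < u x}, fderiv ℝ η x e := by
  have hsmall : ∀ᶠ t in 𝓝[>] (0 : ℝ), ‖t • e‖₊ * L ≤ 1 / 2 := by
    have hlim : Tendsto (fun t : ℝ => ‖t • e‖₊ * L) (𝓝[>] 0) (𝓝 0) :=
      (Continuous.tendsto' (by fun_prop) 0 0 (by simp)).mono_left nhdsWithin_le_nhds
    exact hlim.eventually_le_const (by positivity)
  refine nonneg_of_eventually_nonneg_mul_add_sq_mul (q :=
    2 * ∫ x in Ω ∩ ball c r, ‖gradient η x‖ ^ 2 * fderiv ℝ u x e * fderiv ℝ u x e) ?_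
  filter_upwards [hsmall] with t ht
  have h := hu.integral_innerVariationDensity_add_nonneg hul hΩ hη hηl hsupp ht
  have hrem (x) : ‖gradient η x‖ ^ 2 * fderiv ℝ u x (t • e) * fderiv ℝ u x (t • e) =
      t ^ 2 * (‖gradient η x‖ ^ 2 * fderiv ℝ u x e * fderiv ℝ u x e) := by
    rw [map_smul, smul_eq_mul]
    ring
  simp only [innerVariationDensity_smul, hrem, integral_const_mul] at h
  simp only [map_smul, smul_eq_mul, integral_const_mul] at h
  linarith

lemma IsMinimizer.integral_innerVariationDensity_add_integral_fderiv_eq_zero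
    (hu : IsMinimizer Ω u) (hul : LipschitzWith K u) (hΩ : MeasurableSet Ω)
    (hη : Differentiable ℝ η) (hηl : LipschitzWith L η)
    (hsupp : Function.support η ⊆ Ω ∩ ball c r) (e : EuclideanSpace ℝ (Fin n)) :
    (∫ x in Ω ∩ ball c r, innerVariationDensity u η e x) +
      ∫ x in Ω ∩ ball c r ∩ {x | 0 < u x}, fderiv ℝ η x e = 0 := by
  have hnonneg :=
    hu.integral_innerVariationDensity_add_integral_fderiv_nonneg hul hΩ hη hηl hsupp
  have hneg := hnonneg ((-1 : ℝ) • e)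
  simp only [innerVariationDensity_smul, map_smul, smul_eq_mul, integral_const_mul] at hneg
  linarith [hnonneg e]

end Stationarity

section Rigidity

variable {n : ℕ} {u V : EuclideanSpace ℝ (Fin n) → ℝ}

lemma IsMinimizer.setIntegral_fderiv_eq_zero_of_const_mul {K : ℝ≥0} (hV : IsMinimizer univ V)
    (hVl : LipschitzWith K V) {c : ℝ} (hc : 0 < c) (hc1 : c ≠ 1)
    (hcV : IsMinimizer univ fun x => c * V x) {η : EuclideanSpace ℝ (Fin n) → ℝ}
    (hη : ContDiff ℝ 1 η) (hηc : HasCompactSupport η) (e : EuclideanSpace ℝ (Fin n)) :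
    ∫ x in {x | 0 < V x}, fderiv ℝ η x e = 0 := by
  obtain ⟨L, hηl⟩ := hη.lipschitzWith_of_hasCompactSupport hηc one_ne_zero
  obtain ⟨R, hR⟩ := hηc.isCompact.isBounded.subset_ball (0 : EuclideanSpace ℝ (Fin n))
  have hsupp : Function.support η ⊆ univ ∩ ball 0 R :=
    ((subset_tsupport η).trans hR).trans_eq (univ_inter _).symm
  have hstat := hV.integral_innerVariationDensity_add_integral_fderiv_eq_zero hVl
    MeasurableSet.univ (hη.differentiable one_ne_zero) hηl hsupp e
  have hstat_c := hcV.integral_innerVariationDensity_add_integral_fderiv_eq_zero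
    ((lipschitzWith_smul c).comp hVl) MeasurableSet.univ (hη.differentiable one_ne_zero) hηl
    hsupp e
  simp only [innerVariationDensity_const_mul, integral_const_mul, mul_pos_iff_of_pos_left hc]
    at hstat_c
  set A := ∫ x in univ ∩ ball 0 R, innerVariationDensity V η e x
  have hA : A = 0 := by
    have hmul : (c ^ 2 - 1) * A = 0 := by linarith
    exact (mul_eq_zero.1 hmul).resolve_left
      (sub_ne_zero.2 fun h => hc1 ((pow_eq_one_iff_of_nonneg hc.le two_ne_zero).1 h))
  rw [hA, zero_add, univ_inter, inter_comm] at hstat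
  refine (setIntegral_eq_of_subset_of_forall_sdiff_eq_zero
    (isOpen_lt continuous_const hVl.continuous).measurableSet inter_subset_left
    fun x hx => ?_).trans hstat
  have hx' : x ∉ tsupport η := fun hxη => hx.2 ⟨hx.1, hR hxη⟩
  rw [Function.notMem_support.1 fun h => hx' (support_fderiv_subset ℝ h), zero_apply]

lemma IsMinimizer.eq_one_of_const_mul (hV : IsMinimizer univ V) (hVh : IsPosHomogeneous V)
    (hne : V ≠ 0) {c : ℝ} (hc : 0 < c) (hcV : IsMinimizer univ fun x => c * V x) : c = 1 := by
  by_contra hc1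
  obtain ⟨K, hVl⟩ := hVh.exists_lipschitzWith hV.2.1
  obtain ⟨x, hx⟩ := Function.ne_iff.1 hne
  have hfull := volume_compl_eq_zero_of_setIntegral_fderiv_eq_zero
    (isOpen_lt continuous_const hVl.continuous) ⟨x, (hV.1 x).lt_of_ne' hx⟩
    fun η hη hηc e => hV.setIntegral_fderiv_eq_zero_of_const_mul hVl hc hc1 hcV hη hηc e
  have hzero : {x | 0 < V x}ᶜ = {x | V x = 0} :=
    ext fun x => not_lt.trans (hV.1 x).ge_iff_eq'
  exact (hV.volume_setOf_eq_zero_pos hVh).ne' (hzero ▸ hfull)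

theorem IsMinimizer.eq_of_le (hu : IsMinimizer univ u) (hV : IsMinimizer univ V)
    (huh : IsPosHomogeneous u) (hVh : IsPosHomogeneous V) (hne : u ≠ 0)
    (hle : ∀ x, u x ≤ V x) : u = V := by
  obtain ⟨c, hc, hcV⟩ := hu.exists_eq_const_mul hV huh hVh hne hle
  obtain rfl : u = fun x => c * V x := funext hcV
  have hVne : V ≠ 0 := fun h => hne (by simp [h, Pi.zero_def])
  obtain rfl := hV.eq_one_of_const_mul hVh hVne hc hu
  simp only [one_mul]

end Rigidity

theorem stmt12_general {n : ℕ} {U₀ V : EuclideanSpace ℝ (Fin n) → ℝ}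
    (hU₀min : IsMinimizer univ U₀) (hU₀ne : U₀ ≠ 0) (hU₀hom : IsPosHomogeneous U₀)
    (hV : IsMinimizer univ V) (hVhom : IsPosHomogeneous V)
    (hcase : (∀ x, U₀ x ≤ V x) ∨ ((∀ x, V x ≤ U₀ x) ∧ V ≠ 0)) : V = U₀ := by
  rcases hcase with hle | ⟨hge, hVne⟩
  · exact (hU₀min.eq_of_le hV hU₀hom hVhom hU₀ne hle).symm
  · exact hV.eq_of_le hU₀min hVhom hU₀hom hVne hge

/-- rigidity of comparable positively 1-homogeneous global minimizers. -/
theorem stmt12 {n : ℕ} (hn : 2 ≤ n) (U₀ : EuclideanSpace ℝ (Fin n) → ℝ)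
    (hU₀min : IsMinimizer (Set.univ : Set (EuclideanSpace ℝ (Fin n))) U₀)
    (hU₀ne : U₀ ≠ 0)
    (hU₀hom : ∀ t : ℝ, 0 < t → ∀ x, U₀ (t • x) = t * U₀ x)
    (hconn : IsConnected {x | 0 < U₀ x})
    (V : EuclideanSpace ℝ (Fin n) → ℝ)
    (hV : IsMinimizer (Set.univ : Set (EuclideanSpace ℝ (Fin n))) V)
    (hVhom : ∀ t : ℝ, 0 < t → ∀ x, V (t • x) = t * V x)
    (hcase : (∀ x, U₀ x ≤ V x) ∨ ((∀ x, V x ≤ U₀ x) ∧ V ≠ 0)) :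
    V = U₀ :=
  stmt12_general hU₀min hU₀ne hU₀hom hV hVhom hcase
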